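/- arXiv:0812.1265 — 4 statements merged into one kernel-verified Lean document; each statement's English description precedes it below -/
import Mathlib

section
/- Let n ≥ 1 and let V be a nonnegative locally integrable function on ℝⁿ. Then for every u ∈ C_c^∞(ℝⁿ) one has ∫_{ℝⁿ} V|u| dμ ≤ ∫_{ℝⁿ} |−Δu + Vu| dμ and ∫_{ℝⁿ} |Δu| dμ ≤ 2 ∫_{ℝⁿ} |−Δu + Vu| dμ; in particular ‖Δu‖_{L¹} + ‖Vu‖_{L¹} ≤ 3 ‖−Δu + Vu‖_{L¹}. -/
/-!
Formally one tests `f = -Δu + Vu` against `sign u`: since `-∫ Δu sign u ≥ 0` (Kato), this gives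
`∫ V|u| ≤ ∫ f sign u ≤ ∫ |f|`. The sign is replaced by the smooth nondecreasing function
`smoothSign ε`, for which integration by parts gives `∫ Δu β(u) = -∫ β'(u) |∇u|² ≤ 0`
(`integral_lap_mul_comp_nonpos`). The price is an error `ε ∫_{supp u} V`
(`abs_sub_le_mul_smoothSign`), finite by local integrability, and `ε → 0`. The bound on `Δu` is
then the triangle inequality `|Δu| ≤ |f| + V|u|`, and the third claim is the sum of the first two.
-/

open MeasureTheory Metric Filter
open scoped ENNReal NNReal

noncomputable section

/-- The Laplacian on `ℝⁿ`, defined as the trace of the second derivative. -/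
def lap {n : ℕ} (u : EuclideanSpace ℝ (Fin n) → ℝ) (x : EuclideanSpace ℝ (Fin n)) : ℝ :=
  ∑ i : Fin n, iteratedFDeriv ℝ 2 u x ![EuclideanSpace.single i 1, EuclideanSpace.single i 1]

/-- `sin ∘ arctan`, that is `s ↦ s / √(1 + s²)`, rescaled by `ε`: for `ε > 0`, a smooth nondecreasing
approximation of the sign function, with values in `[-1, 1]`. -/
def smoothSign (ε t : ℝ) : ℝ := Real.sin (Real.arctan (t / ε))

lemma smoothSign_hasDerivAt (ε t : ℝ) :
    HasDerivAt (smoothSign ε)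
      (Real.cos (Real.arctan (t / ε)) * (1 / (1 + (t / ε) ^ 2) * (1 / ε))) t :=
  (((hasDerivAt_id t).div_const ε).arctan).sin

lemma smoothSign_contDiff (ε : ℝ) : ContDiff ℝ 1 (smoothSign ε) :=
  Real.contDiff_sin.comp (Real.contDiff_arctan.comp (contDiff_id.div_const ε))

lemma smoothSign_deriv_nonneg {ε : ℝ} (hε : 0 < ε) (t : ℝ) : 0 ≤ deriv (smoothSign ε) t := by
  rw [(smoothSign_hasDerivAt ε t).deriv]
  have := Real.cos_arctan_pos (t / ε)
  positivity

lemma abs_smoothSign_le (ε t : ℝ) : |smoothSign ε t| ≤ 1 := Real.abs_sin_le_one _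

/-- Quantitative form of `t * smoothSign ε t → |t|` as `ε → 0`. -/
lemma abs_sub_le_mul_smoothSign {ε : ℝ} (hε : 0 < ε) (t : ℝ) :
    |t| - ε ≤ t * smoothSign ε t := by
  have key : ∀ s : ℝ, |s| - 1 ≤ s * (s / √(1 + s ^ 2)) := by
    intro s
    have h1 : 1 ≤ √(1 + s ^ 2) := Real.one_le_sqrt.2 (by nlinarith [sq_nonneg s])
    have h2 : √(1 + s ^ 2) ≤ 1 + |s| :=
      Real.sqrt_le_iff.2 ⟨by positivity, by nlinarith [sq_abs s, abs_nonneg s]⟩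
    rw [← mul_div_assoc, le_div_iff₀ (by linarith)]
    rcases le_total 1 |s| with h | h
    · nlinarith [sq_abs s]
    · nlinarith [mul_self_nonneg s]
  have h := mul_le_mul_of_nonneg_left (key (t / ε)) hε.le
  have e1 : ε * (|t / ε| - 1) = |t| - ε := by
    rw [abs_div, abs_of_pos hε]; field_simp
  rw [e1] at h
  rw [smoothSign, Real.sin_arctan]
  refine h.trans_eq ?_
  rw [← mul_assoc, mul_div_cancel₀ _ hε.ne']

section Laplacian

variable {n : ℕ} {u : EuclideanSpace ℝ (Fin n) → ℝ}

lemma lap_eq_sum_fderiv (hu : ContDiff ℝ (⊤ : ℕ∞) u) (x : EuclideanSpace ℝ (Fin n)) :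
    lap u x = ∑ i : Fin n, fderiv ℝ (fun y => fderiv ℝ u y (EuclideanSpace.single i 1)) x
      (EuclideanSpace.single i 1) := by
  refine Finset.sum_congr rfl fun i _ => ?_
  have hd : DifferentiableAt ℝ (fderiv ℝ u) x :=
    (hu.fderiv_right (m := (⊤ : ℕ∞)) (by simp)).differentiable (by simp) x
  rw [iteratedFDeriv_two_apply, fderiv_clm_apply hd (differentiableAt_const _)]
  simp

lemma contDiff_fderiv_apply (hu : ContDiff ℝ (⊤ : ℕ∞) u) (v : EuclideanSpace ℝ (Fin n)) :
    ContDiff ℝ (⊤ : ℕ∞) (fun y => fderiv ℝ u y v) :=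
  (hu.fderiv_right (m := (⊤ : ℕ∞)) (by simp)).clm_apply contDiff_const

lemma continuous_lap (hu : ContDiff ℝ (⊤ : ℕ∞) u) : Continuous (lap u) := by
  rw [funext (lap_eq_sum_fderiv hu)]
  exact continuous_finsetSum _ fun i _ =>
    (contDiff_fderiv_apply (contDiff_fderiv_apply hu _) _).continuous

lemma hasCompactSupport_lap (hu : ContDiff ℝ (⊤ : ℕ∞) u) (hsupp : HasCompactSupport u) :
    HasCompactSupport (lap u) := by
  refine hsupp.mono' fun x hx => ?_
  by_contra hx'
  refine hx ?_
  rw [lap_eq_sum_fderiv hu]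
  refine Finset.sum_eq_zero fun i _ => ?_
  set e : EuclideanSpace ℝ (Fin n) := EuclideanSpace.single i 1
  by_contra hne
  exact hx' (tsupport_fderiv_apply_subset ℝ e
    (tsupport_fderiv_apply_subset ℝ e (subset_tsupport _ hne)))

/-- Integration by parts: `∫ Δu β(u) = -∫ β'(u) |∇u|² ≤ 0` for nondecreasing `β`. -/
lemma integral_lap_mul_comp_nonpos (hu : ContDiff ℝ (⊤ : ℕ∞) u) (hsupp : HasCompactSupport u)
    {β : ℝ → ℝ} (hβ : ContDiff ℝ 1 β) (hβ' : ∀ t, 0 ≤ deriv β t) :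
    ∫ x, lap u x * β (u x) ≤ 0 := by
  have hw : ContDiff ℝ 1 (fun x => β (u x)) := hβ.comp (hu.of_le (by exact_mod_cast le_top))
  have hd : ∀ x v, fderiv ℝ (fun x => β (u x)) x v = deriv β (u x) * fderiv ℝ u x v := by
    intro x v
    have h1 : HasFDerivAt u (fderiv ℝ u x) x := (hu.differentiable (by simp) x).hasFDerivAt
    have h2 := (hβ.differentiable one_ne_zero (u x)).hasDerivAt
    have h3 : HasFDerivAt (fun x => β (u x)) (deriv β (u x) • fderiv ℝ u x) x :=
      h2.comp_hasFDerivAt x h1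
    rw [h3.fderiv]
    simp
  have hg (i : Fin n) := contDiff_fderiv_apply hu (EuclideanSpace.single i 1)
  have hgs (i : Fin n) : HasCompactSupport (fun y => fderiv ℝ u y (EuclideanSpace.single i 1)) :=
    hsupp.fderiv_apply ℝ _
  have hggs (i : Fin n) := (hgs i).fderiv_apply ℝ (EuclideanSpace.single i 1)
  have hgg (i : Fin n) := (contDiff_fderiv_apply (hg i) (EuclideanSpace.single i 1)).continuous
  have hint (i : Fin n) : Integrable (fun x =>
      fderiv ℝ (fun y => fderiv ℝ u y (EuclideanSpace.single i 1)) x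
        (EuclideanSpace.single i 1) * β (u x)) :=
    ((hgg i).mul hw.continuous).integrable_of_hasCompactSupport (hggs i).mul_right
  simp_rw [lap_eq_sum_fderiv hu, Finset.sum_mul]
  rw [integral_finsetSum _ fun i _ => hint i]
  refine Finset.sum_nonpos fun i _ => ?_
  have hwc : Continuous (fun x => fderiv ℝ (fun x => β (u x)) x (EuclideanSpace.single i 1)) :=
    (hw.continuous_fderiv one_ne_zero).clm_apply continuous_const
  have ibp := integral_mul_fderiv_eq_neg_fderiv_mul_of_integrable (μ := volume) (hint i)
    (((hg i).continuous.mul hwc).integrable_of_hasCompactSupport (hgs i).mul_right)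
    (((hg i).continuous.mul hw.continuous).integrable_of_hasCompactSupport (hgs i).mul_right)
    (fun x _ => (hg i).differentiable (by simp) x) (fun x _ => hw.differentiable one_ne_zero x)
  have hnn : 0 ≤ ∫ x, fderiv ℝ u x (EuclideanSpace.single i 1) *
      fderiv ℝ (fun x => β (u x)) x (EuclideanSpace.single i 1) := by
    refine integral_nonneg fun x => ?_
    have := mul_nonneg (hβ' (u x)) (mul_self_nonneg (fderiv ℝ u x (EuclideanSpace.single i 1)))
    simp only [hd, Pi.zero_apply]
    linarith
  linarith

end Laplacian

/-- **`L¹` maximal inequality** (Euclidean case of Lemma 5.1): for any nonnegative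
locally integrable `V` and any `u ∈ C_c^∞(ℝⁿ)`,
`∫ V|u| ≤ ∫ |(-Δ+V)u|`, `∫ |Δu| ≤ 2∫ |(-Δ+V)u|`, and hence
`‖Δu‖₁ + ‖Vu‖₁ ≤ 3 ‖(-Δ+V)u‖₁`. -/
theorem l1_maximal_inequality {n : ℕ} (hn : 1 ≤ n)
    (V : EuclideanSpace ℝ (Fin n) → ℝ)
    (hV0 : ∀ x, 0 ≤ V x) (hVloc : LocallyIntegrable V volume)
    (u : EuclideanSpace ℝ (Fin n) → ℝ)
    (hu : ContDiff ℝ (⊤ : ℕ∞) u) (hsupp : HasCompactSupport u) :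
    (∫ x, V x * |u x|) ≤ (∫ x, |(-lap u x + V x * u x)|) ∧
    (∫ x, |lap u x|) ≤ 2 * (∫ x, |(-lap u x + V x * u x)|) ∧
    eLpNorm (fun x => lap u x) 1 volume + eLpNorm (fun x => V x * u x) 1 volume
      ≤ 3 * eLpNorm (fun x => -lap u x + V x * u x) 1 volume := by
  have hΔ : Integrable (lap u) :=
    (continuous_lap hu).integrable_of_hasCompactSupport (hasCompactSupport_lap hu hsupp)
  have hVu : Integrable (fun x => V x * u x) :=
    hVloc.integrable_smul_right_of_hasCompactSupport hu.continuous hsupp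
  have hVa : Integrable (fun x => V x * |u x|) :=
    hVu.norm.congr (ae_of_all _ fun x => by simp [abs_of_nonneg (hV0 x)])
  have hf : Integrable (fun x => -lap u x + V x * u x) := hΔ.neg.add hVu
  have h1 : (∫ x, V x * |u x|) ≤ ∫ x, |(-lap u x + V x * u x)| := by
    have hVK : Integrable ((tsupport u).indicator V) :=
      (integrable_indicator_iff (isClosed_tsupport u).measurableSet).2
        (hVloc.integrableOn_isCompact hsupp)
    have hC : 0 ≤ ∫ x, (tsupport u).indicator V x :=
      integral_nonneg fun x => Set.indicator_nonneg (fun y _ => hV0 y) x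
    have approx : ∀ ε : ℝ, 0 < ε → (∫ x, V x * |u x|) ≤
        (∫ x, |(-lap u x + V x * u x)|) + ε * ∫ x, (tsupport u).indicator V x := by
      intro ε hε
      have hlapβ : Integrable (fun x => lap u x * smoothSign ε (u x)) :=
        ((continuous_lap hu).mul ((smoothSign_contDiff ε).continuous.comp
          hu.continuous)).integrable_of_hasCompactSupport
          (hasCompactSupport_lap hu hsupp).mul_right
      -- Testing `-Δu + Vu` against `smoothSign ε (u)`, which is bounded by `1`.
      have pt : ∀ x, V x * |u x| ≤ |(-lap u x + V x * u x)| + ε * (tsupport u).indicator V x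
          + lap u x * smoothSign ε (u x) := by
        intro x
        have hb : (-lap u x + V x * u x) * smoothSign ε (u x) ≤ |(-lap u x + V x * u x)| := by
          refine (le_abs_self _).trans ?_
          rw [abs_mul]
          exact mul_le_of_le_one_right (abs_nonneg _) (abs_smoothSign_le _ _)
        have hs : V x * |u x| ≤ V x * (u x * smoothSign ε (u x))
            + ε * (tsupport u).indicator V x := by
          by_cases hx : x ∈ tsupport u
          · rw [Set.indicator_of_mem hx]
            have := mul_le_mul_of_nonneg_left (abs_sub_le_mul_smoothSign hε (u x)) (hV0 x)
            linarith
          · simp [Set.indicator_of_notMem hx, image_eq_zero_of_notMem_tsupport hx]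
        linarith
      have hI := integral_mono hVa ((hf.abs.add (hVK.const_mul ε)).add hlapβ) pt
      have e : (∫ x, (|(-lap u x + V x * u x)| + ε * (tsupport u).indicator V x
          + lap u x * smoothSign ε (u x))) = (∫ x, |(-lap u x + V x * u x)|)
          + ε * (∫ x, (tsupport u).indicator V x) + ∫ x, lap u x * smoothSign ε (u x) := by
        have hsum : Integrable (fun x =>
            |(-lap u x + V x * u x)| + ε * (tsupport u).indicator V x) :=
          hf.abs.add (hVK.const_mul ε)
        rw [integral_add hsum hlapβ, integral_add hf.abs (hVK.const_mul ε), integral_const_mul]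
      have hneg := integral_lap_mul_comp_nonpos hu hsupp (smoothSign_contDiff ε)
        (smoothSign_deriv_nonneg hε)
      have hI' := hI.trans_eq e
      linarith
    refine le_of_forall_pos_le_add fun δ hδ => ?_
    refine (approx (δ / ((∫ x, (tsupport u).indicator V x) + 1)) (by positivity)).trans ?_
    gcongr
    rw [div_mul_eq_mul_div, div_le_iff₀ (by positivity)]
    nlinarith
  have h2 : (∫ x, |lap u x|) ≤ 2 * (∫ x, |(-lap u x + V x * u x)|) := by
    have hI : (∫ x, |lap u x|) ≤ ∫ x, (|(-lap u x + V x * u x)| + V x * |u x|) := by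
      refine integral_mono hΔ.abs (hf.abs.add hVa) fun x => ?_
      have h := abs_sub (V x * u x) (-lap u x + V x * u x)
      rw [abs_mul, abs_of_nonneg (hV0 x)] at h
      have e : V x * u x - (-lap u x + V x * u x) = lap u x := by ring
      rw [e] at h
      linarith
    rw [integral_add hf.abs hVa] at hI
    linarith
  refine ⟨h1, h2, ?_⟩
  have hVabs : (∫ x, ‖V x * u x‖) = ∫ x, V x * |u x| :=
    integral_congr_ae (ae_of_all _ fun x => by simp [abs_of_nonneg (hV0 x)])
  simp_rw [eLpNorm_one_eq_lintegral_enorm]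
  rw [← ofReal_integral_norm_eq_lintegral_enorm hΔ, ← ofReal_integral_norm_eq_lintegral_enorm hVu,
    ← ofReal_integral_norm_eq_lintegral_enorm hf, hVabs,
    ← ENNReal.ofReal_add (integral_nonneg fun _ => norm_nonneg _)
      (integral_nonneg fun x => mul_nonneg (hV0 x) (abs_nonneg _)),
    show (3 : ℝ≥0∞) = ENNReal.ofReal 3 by simp, ← ENNReal.ofReal_mul (by norm_num)]
  simp only [Real.norm_eq_abs]
  exact ENNReal.ofReal_le_ofReal (by linarith)
end
end

section
/- Let n ≥ 1 and let V be a nonnegative locally integrable function on ℝⁿ. Suppose u ∈ L¹(ℝⁿ) is such that Vu ∈ L¹(ℝⁿ) and u is a distributional solution of −Δu + Vu = 0, i.e., ∫_{ℝⁿ} u Δφ dμ = ∫_{ℝⁿ} V u φ dμ for every φ ∈ C_c^∞(ℝⁿ). Then u = 0 almost everywhere. -/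
/-!
The proof uses only that `Δ` is dissipative on `L¹`, that is, `‖u‖₁ ≤ ‖u - ε Δu‖₁` for every `ε > 0`
whenever `u` and `Δu` are integrable (`integral_abs_le`). By duality this is the statement that
`(1 - ε Δ)⁻¹` contracts the sup norm: for a test function `ψ` with `|ψ| ≤ 1`, the equation
`φ - ε Δφ = ψ` is solved in the Schwartz class by a Fourier multiplier (`exists_resolvent`), the
maximum principle gives `|φ| ≤ 1` (`max_principle_abs`), and
`∫ u ψ = ∫ (u - ε Δu) φ ≤ ‖u - ε Δu‖₁`. Here the weak equation is extended from compactly supported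
to Schwartz test functions by cutoffs (`weak_schwartz`).

With `Δu = Vu` and `ε = 1 / k` the inequality reads `0 ≤ ∫ (|k - V| - k) |u|`. The integrand is
dominated by `V |u|` and converges to `-V |u|` as `k → ∞`, hence `∫ V |u| ≤ 0` and `Vu = 0`
(`potential_term_zero`). Then `u` is an integrable harmonic function, and
`∫ u ψ = ∫ u (1 - k² Δ)⁻¹ ψ → 0` as `k → ∞` for every test function `ψ`, so `u = 0`
(`harmonic_L1`). Throughout, `ε` is written `s²`, so that the multiplier is a dilate of
`(1 + |ξ|²)⁻¹`.
-/

open MeasureTheory Metric Filter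
open scoped ENNReal NNReal

noncomputable section

open scoped SchwartzMap FourierTransform Laplacian ContDiff Topology

local notation "𝔼" n => EuclideanSpace ℝ (Fin n)

theorem lap_eq_laplacian {n : ℕ} (f : (𝔼 n) → ℝ) : lap f = Laplacian.laplacian f := by
  rw [InnerProductSpace.laplacian_eq_iteratedFDeriv_orthonormalBasis f
    (EuclideanSpace.basisFun (Fin n) ℝ)]
  ext x
  simp [lap]

/-! ### The resolvent on Schwartz functions -/

theorem mult_growth {n : ℕ} (s : ℝ) :
    (fun ξ : 𝔼 n => (1 + ‖(2 * Real.pi * s) • ξ‖ ^ 2)⁻¹).HasTemperateGrowth := by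
  have h := (Function.hasTemperateGrowth_one_add_norm_sq_rpow (H := 𝔼 n) (-1)).comp
    (((2 * Real.pi * s) • ContinuousLinearMap.id ℝ (𝔼 n)).hasTemperateGrowth)
  have heq : (fun ξ : 𝔼 n => (1 + ‖(2 * Real.pi * s) • ξ‖ ^ 2)⁻¹) =
      (fun x : 𝔼 n => (1 + ‖x‖ ^ 2) ^ (-1 : ℝ)) ∘
        ⇑((2 * Real.pi * s) • ContinuousLinearMap.id ℝ (𝔼 n)) := by
    ext ξ
    simp [Real.rpow_neg_one]
  rw [heq]
  exact h

/-- Solvability of `φ - s² Δφ = ψ` in the Schwartz class: `φ` is the Fourier multiplier with symbol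
`(1 + |2πsξ|²)⁻¹` applied to `ψ`. The sup bound on `φ` comes from Fourier inversion. -/
theorem exists_resolvent_complex {n : ℕ} (s : ℝ) (ψ : 𝓢(𝔼 n, ℂ)) :
    ∃ φ : 𝓢(𝔼 n, ℂ), φ - s ^ 2 • Δ φ = ψ ∧
      ∀ x, ‖φ x‖ ≤ ∫ ξ, (1 + ‖(2 * Real.pi * s) • ξ‖ ^ 2)⁻¹ * ‖𝓕 ψ ξ‖ := by
  set m : (𝔼 n) → ℝ := fun ξ => (1 + ‖(2 * Real.pi * s) • ξ‖ ^ 2)⁻¹ with hm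
  have hmg : m.HasTemperateGrowth := mult_growth s
  refine ⟨SchwartzMap.fourierMultiplierCLM ℂ m ψ, ?_, fun x => ?_⟩
  · rw [SchwartzMap.laplacian_eq_fourierMultiplierCLM,
      SchwartzMap.fourierMultiplierCLM_fourierMultiplierCLM_apply (by
        simpa [Pi.pow_def] using Function.hasTemperateGrowth_norm_sq (H := 𝔼 n)) hmg]
    have key : 𝓕 ψ = SchwartzMap.smulLeftCLM ℂ m (𝓕 ψ) + (s ^ 2 * (2 * Real.pi) ^ 2) •
        SchwartzMap.smulLeftCLM ℂ ((fun ξ => ‖ξ‖) ^ 2 * m) (𝓕 ψ) := by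
      ext ξ
      have h2 : ((fun ξ : 𝔼 n => ‖ξ‖) ^ 2 * m).HasTemperateGrowth := by
        refine Function.HasTemperateGrowth.mul ?_ hmg
        simpa [Pi.pow_def] using Function.hasTemperateGrowth_norm_sq (H := 𝔼 n)
      simp only [add_apply, smul_apply,
        SchwartzMap.smulLeftCLM_apply_apply hmg, SchwartzMap.smulLeftCLM_apply_apply h2, smul_smul,
        ← add_smul]
      have : m ξ + s ^ 2 * (2 * Real.pi) ^ 2 * ((fun ξ : 𝔼 n => ‖ξ‖) ^ 2 * m) ξ = 1 := by
        have : 0 < 1 + (2 * Real.pi * s) ^ 2 * ‖ξ‖ ^ 2 := by positivity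
        simp only [hm, norm_smul, Pi.mul_apply, Pi.pow_apply, mul_pow, Real.norm_eq_abs, sq_abs]
          at this ⊢
        field_simp
      rw [this, one_smul]
    conv_rhs => rw [← FourierTransform.fourierInv_fourier_eq (F := 𝓢(𝔼 n, ℂ)) ψ, key]
    simp only [SchwartzMap.fourierMultiplierCLM_apply, FourierTransform.fourierInv_add,
      FourierTransform.fourierInv_smul, smul_smul, sub_eq_add_neg, ← neg_smul]
    congr 2
    ring
  · rw [SchwartzMap.fourierMultiplierCLM_apply, SchwartzMap.fourierInv_coe,
      Real.fourierInv_eq']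
    refine (norm_integral_le_integral_norm _).trans (le_of_eq ?_)
    congr 1
    ext ξ
    rw [norm_smul, SchwartzMap.smulLeftCLM_apply_apply hmg, norm_smul]
    have : 0 ≤ m ξ := by positivity
    rw [Real.norm_of_nonneg this, Complex.norm_exp_ofReal_mul_I]
    simp [hm]

/-- Solvability of `φ - s² Δφ = ψ` for real Schwartz functions, obtained by taking real parts. The
function `h`, which is `|𝓕 ψ|`, does not depend on `s`, so that the bound on `φ` can be sent to `0`
as `s → ∞` by dominated convergence. -/
theorem exists_resolvent {n : ℕ} (ψ : 𝓢(𝔼 n, ℝ)) : ∃ h : (𝔼 n) → ℝ, Integrable h ∧ (∀ ξ, 0 ≤ h ξ) ∧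
    ∀ s : ℝ, ∃ φ : 𝓢(𝔼 n, ℝ), (∀ x, φ x - s ^ 2 * lap φ x = ψ x) ∧
      ∀ x, |φ x| ≤ ∫ ξ, (1 + ‖(2 * Real.pi * s) • ξ‖ ^ 2)⁻¹ * h ξ := by
  refine ⟨fun ξ => ‖𝓕 (SchwartzMap.postcompCLM Complex.ofRealCLM ψ) ξ‖,
    (SchwartzMap.integrable _).norm, fun ξ => norm_nonneg _, fun s => ?_⟩
  obtain ⟨φ, h1, h2⟩ := exists_resolvent_complex s (SchwartzMap.postcompCLM Complex.ofRealCLM ψ)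
  refine ⟨SchwartzMap.postcompCLM Complex.reCLM φ, fun x => ?_, fun x => ?_⟩
  · have := congrArg (fun f : 𝓢(𝔼 n, ℂ) => (f x).re) h1
    simp only [sub_apply, smul_apply, SchwartzMap.postcompCLM_apply,
      Complex.ofRealCLM_apply, Complex.ofReal_re, Complex.sub_re, Complex.smul_re,
      SchwartzMap.laplacian_apply] at this
    rw [← this, lap_eq_laplacian]
    have h3 := (φ.smooth 2).contDiffAt.laplacian_CLM_comp_left (l := Complex.reCLM) (x := x)
    have : ((SchwartzMap.postcompCLM Complex.reCLM φ : 𝓢(𝔼 n, ℝ)) : (𝔼 n) → ℝ) =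
      Complex.reCLM ∘ φ := rfl
    rw [this, h3]
    simp
  · refine le_trans ?_ (h2 x)
    simpa using Complex.abs_re_le_norm (φ x)

/-! ### The maximum principle -/

theorem deriv2_nonpos_of_isLocalMax {f : ℝ → ℝ} {a : ℝ} (hf : ContinuousAt f a)
    (h : IsLocalMax f a) : deriv (deriv f) a ≤ 0 := by
  by_contra! hc
  -- a positive second derivative makes `a` a local minimum as well, so `f` is constant near `a`
  have hmin := isLocalMin_of_deriv_deriv_pos hc h.deriv_eq_zero hf
  have heq : f =ᶠ[𝓝 a] fun _ => f a := by
    filter_upwards [h, hmin] with x h1 h2 using le_antisymm h1 h2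
  have := heq.deriv.deriv_eq
  simp at this
  linarith

theorem lap_nonpos_of_isLocalMax {n : ℕ} {f : (𝔼 n) → ℝ} (hf : ContDiff ℝ 2 f) {a : 𝔼 n}
    (h : IsLocalMax f a) : lap f a ≤ 0 := by
  refine Finset.sum_nonpos fun i _ => ?_
  set e : 𝔼 n := EuclideanSpace.single i 1
  have hline : ∀ t : ℝ, HasDerivAt (fun t : ℝ => a + t • e) e t := fun t => by
    simpa using ((hasDerivAt_id t).smul_const e).const_add a
  have h1 : deriv (fun t : ℝ => f (a + t • e)) = fun t => fderiv ℝ f (a + t • e) e := by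
    ext t
    exact ((hf.differentiable (by norm_num) _).hasFDerivAt.comp_hasDerivAt t (hline t)).deriv
  have h2 : deriv (deriv (fun t : ℝ => f (a + t • e))) 0 = iteratedFDeriv ℝ 2 f a ![e, e] := by
    rw [h1, iteratedFDeriv_two_apply]
    have hd : Differentiable ℝ (fderiv ℝ f) :=
      (hf.fderiv_right (m := 1) (by norm_num)).differentiable (by norm_num)
    have := ((hd _).hasFDerivAt.comp_hasDerivAt (0 : ℝ) (hline 0)).clm_apply
      (hasDerivAt_const (0 : ℝ) e)
    simpa using this.deriv
  rw [← h2]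
  have hcont : Continuous fun t : ℝ => a + t • e := by fun_prop
  refine deriv2_nonpos_of_isLocalMax (hf.continuous.comp hcont).continuousAt ?_
  have : Tendsto (fun t : ℝ => a + t • e) (𝓝 0) (𝓝 a) := by
    simpa using hcont.tendsto 0
  have := this.eventually h
  simpa [IsLocalMax, IsMaxFilter] using this

/-- A function vanishing at infinity and exceeding `M ≥ 0` somewhere attains its maximum, and there
its Laplacian is nonpositive. -/
theorem max_principle {n : ℕ} (s M : ℝ) (hM : 0 ≤ M) (φ : 𝓢(𝔼 n, ℝ))
    (h : ∀ x, φ x - s ^ 2 * lap φ x ≤ M) (x : 𝔼 n) : φ x ≤ M := by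
  by_contra! hx
  obtain ⟨y, hy⟩ := φ.continuous.exists_forall_ge' x
    ((φ.tendsto_cocompact.eventually_lt_const (hM.trans_lt hx)).mono fun _ => le_of_lt)
  have h1 := lap_nonpos_of_isLocalMax (φ.smooth 2) (a := y) (Eventually.of_forall hy)
  nlinarith [h y, hy x, sq_nonneg s]

/-- The resolvent `(1 - s² Δ)⁻¹` is a contraction for the sup norm. -/
theorem max_principle_abs {n : ℕ} (s M : ℝ) (φ : 𝓢(𝔼 n, ℝ))
    (h : ∀ x, |φ x - s ^ 2 * lap φ x| ≤ M) (x : 𝔼 n) : |φ x| ≤ M := by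
  have hM : 0 ≤ M := (abs_nonneg _).trans (h x)
  refine abs_le'.2 ⟨max_principle s M hM φ (fun y => (abs_le'.1 (h y)).1) x,
    max_principle s M hM (-φ) (fun y => ?_) x⟩
  have := (abs_le'.1 (h y)).2
  have h2 : lap (-φ : 𝓢(𝔼 n, ℝ)) y = - lap φ y := by
    have h3 := congrFun (InnerProductSpace.laplacian_neg (f := (φ : (𝔼 n) → ℝ))) y
    rw [lap_eq_laplacian, lap_eq_laplacian]
    exact h3
  rw [h2, neg_apply]
  linarith

/-! ### From compactly supported to Schwartz test functions -/

theorem abs_lap_le {n : ℕ} (f : (𝔼 n) → ℝ) (x : 𝔼 n) :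
    |lap f x| ≤ n * ‖iteratedFDeriv ℝ 2 f x‖ := by
  refine (Finset.abs_sum_le_sum_abs _ _).trans ?_
  refine (Finset.sum_le_card_nsmul _ _ ‖iteratedFDeriv ℝ 2 f x‖ fun i _ => ?_).trans (by simp)
  refine ((iteratedFDeriv ℝ 2 f x).le_opNorm _).trans ?_
  simp [Fin.prod_univ_two]

theorem continuous_lap_s2 {n : ℕ} {f : (𝔼 n) → ℝ} (hf : ContDiff ℝ 2 f) : Continuous (lap f) := by
  unfold lap
  have := hf.continuous_iteratedFDeriv (m := 2) le_rfl
  fun_prop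

theorem two_le_infty : ((2 : ℕ) : WithTop ℕ∞) ≤ ((⊤ : ℕ∞) : WithTop ℕ∞) := by
  rw [← WithTop.coe_natCast, WithTop.coe_le_coe]
  exact le_top

/-- A Schwartz function `φ` is approximated by the products `χ(x / (k + 1)) φ(x)`, with `χ` a bump
function equal to `1` near the origin: at each point the values and Laplacians are eventually equal,
and the Leibniz formula bounds the Laplacians uniformly. -/
theorem exists_cutoff {n : ℕ} (φ : 𝓢(𝔼 n, ℝ)) : ∃ (f : ℕ → (𝔼 n) → ℝ) (C : ℝ),
    (∀ k, ContDiff ℝ (⊤ : ℕ∞) (f k)) ∧ (∀ k, HasCompactSupport (f k)) ∧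
    (∀ k x, |f k x| ≤ C) ∧ (∀ k x, |lap (f k) x| ≤ C) ∧
    (∀ x, ∀ᶠ k in atTop, f k x = φ x ∧ lap (f k) x = lap φ x) := by
  let χ : ContDiffBump (0 : 𝔼 n) := ⟨1, 2, one_pos, one_lt_two⟩
  have hχs : ContDiff ℝ (⊤ : ℕ∞) χ := χ.contDiff
  let X : 𝓢(𝔼 n, ℝ) := χ.hasCompactSupport.toSchwartzMap hχs
  have hX : ∀ x, X x = χ x := fun _ => rfl
  let r : ℕ → ℝ := fun k => (k + 1 : ℝ)⁻¹
  have hr0 : ∀ k, 0 < r k := fun k => by positivity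
  have hr1 : ∀ k, r k ≤ 1 := fun k => inv_le_one_of_one_le₀ (by simp)
  let c : ℕ → (𝔼 n) → ℝ := fun k x => χ (r k • x)
  have hcs : ∀ k, ContDiff ℝ (⊤ : ℕ∞) (c k) := fun k => hχs.comp (contDiff_const_smul _)
  let A : ℕ → ℝ := fun i => SchwartzMap.seminorm ℝ 0 i X
  let B : ℕ → ℝ := fun i => SchwartzMap.seminorm ℝ 0 i φ
  have hA0 : ∀ i, 0 ≤ A i := fun i => apply_nonneg _ _
  have hB : ∀ i x, ‖iteratedFDeriv ℝ i φ x‖ ≤ B i := fun i x =>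
    SchwartzMap.norm_iteratedFDeriv_le_seminorm ℝ φ i x
  have hA : ∀ i k x, ‖iteratedFDeriv ℝ i (c k) x‖ ≤ A i := fun i k x => by
    have h1 := congrFun (iteratedFDeriv_comp_const_smul (i := i) (r k)
      (hχs.of_le (by exact_mod_cast le_top))) x
    have h2 := SchwartzMap.norm_iteratedFDeriv_le_seminorm ℝ X i (r k • x)
    change iteratedFDeriv ℝ i (c k) x = _ at h1
    rw [h1, norm_smul, norm_pow, Real.norm_of_nonneg (hr0 k).le]
    calc _ ≤ 1 * A i := by
          gcongr
          · exact pow_le_one₀ (hr0 k).le (hr1 k)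
          · exact h2
      _ = A i := one_mul _
  let S : ℝ := ∑ i ∈ Finset.range 3, (Nat.choose 2 i : ℝ) * A i * B (2 - i)
  refine ⟨fun k x => c k x * φ x, max (B 0) (n * S), fun k => (hcs k).mul (φ.smooth _), fun k => ?_,
    fun k x => le_max_of_le_left ?_, fun k x => le_max_of_le_right ?_, fun x => ?_⟩
  · exact (χ.hasCompactSupport.comp_smul (hr0 k).ne').mul_right
  · have h1 : |c k x| ≤ 1 := by
      rw [abs_of_nonneg χ.nonneg]; exact χ.le_one
    have h2 : |φ x| ≤ B 0 := by simpa using hB 0 x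
    rw [abs_mul]
    calc _ ≤ 1 * B 0 := by gcongr
      _ = _ := one_mul _
  · refine (abs_lap_le _ x).trans ?_
    gcongr
    refine (norm_iteratedFDeriv_mul_le (hcs k) (φ.smooth (⊤ : ℕ∞)) x
      (n := 2) two_le_infty).trans ?_
    refine Finset.sum_le_sum fun i _ => ?_
    have := hA0 i
    gcongr
    · exact hA i k x
    · exact hB _ x
  · have hlim : Tendsto (fun k => r k * (‖x‖ + 1)) atTop (𝓝 (0 * (‖x‖ + 1))) := by
      refine Tendsto.mul_const _ ?_
      simpa [r] using tendsto_one_div_add_atTop_nhds_zero_nat (𝕜 := ℝ)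
    rw [zero_mul] at hlim
    filter_upwards [hlim.eventually_lt_const one_pos] with k hk
    have hev : (fun x => c k x * φ x) =ᶠ[𝓝 x] φ := by
      filter_upwards [Metric.ball_mem_nhds x one_pos] with y hy
      have hy' : ‖y‖ ≤ ‖x‖ + 1 := by
        have := norm_le_norm_add_norm_sub' y x
        rw [mem_ball, dist_eq_norm] at hy
        linarith
      have : c k y = 1 := by
        refine χ.one_of_mem_closedBall ?_
        rw [mem_closedBall_zero_iff, norm_smul, Real.norm_of_nonneg (hr0 k).le]
        exact (mul_le_mul_of_nonneg_left hy' (hr0 k).le).trans hk.le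
      rw [this, one_mul]
    refine ⟨hev.eq_of_nhds, ?_⟩
    unfold lap
    rw [(hev.iteratedFDeriv ℝ 2).eq_of_nhds]

/-- A weak equation `Δu = w` between integrable functions may be tested against Schwartz
functions. -/
theorem weak_schwartz {n : ℕ} {u w : (𝔼 n) → ℝ} (hu : Integrable u) (hw : Integrable w)
    (hsol : ∀ φ : (𝔼 n) → ℝ, ContDiff ℝ (⊤ : ℕ∞) φ → HasCompactSupport φ →
      (∫ x, u x * lap φ x) = ∫ x, w x * φ x) (φ : 𝓢(𝔼 n, ℝ)) :
    (∫ x, u x * lap φ x) = ∫ x, w x * φ x := by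
  obtain ⟨f, C, hf, hfc, hfC, hlC, hlim⟩ := exists_cutoff φ
  have h1 : Tendsto (fun k => ∫ x, u x * lap (f k) x) atTop (𝓝 (∫ x, u x * lap φ x)) := by
    refine tendsto_integral_of_dominated_convergence (fun x => |u x| * C) (fun k => ?_)
      (hu.abs.mul_const C) (fun k => ?_) ?_
    · exact hu.1.mul (continuous_lap_s2 ((hf k).of_le two_le_infty)).aestronglyMeasurable
    · refine Eventually.of_forall fun x => ?_
      rw [norm_mul]
      exact mul_le_mul_of_nonneg_left (hlC k x) (norm_nonneg _)
    · refine Eventually.of_forall fun x => tendsto_const_nhds.congr' ?_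
      filter_upwards [hlim x] with k hk
      rw [hk.2]
  have h2 : Tendsto (fun k => ∫ x, w x * f k x) atTop (𝓝 (∫ x, w x * φ x)) := by
    refine tendsto_integral_of_dominated_convergence (fun x => |w x| * C) (fun k => ?_)
      (hw.abs.mul_const C) (fun k => ?_) ?_
    · exact hw.1.mul (hf k).continuous.aestronglyMeasurable
    · refine Eventually.of_forall fun x => ?_
      rw [norm_mul]
      exact mul_le_mul_of_nonneg_left (hfC k x) (norm_nonneg _)
    · refine Eventually.of_forall fun x => tendsto_const_nhds.congr' ?_
      filter_upwards [hlim x] with k hk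
      rw [hk.1]
  refine tendsto_nhds_unique h1 (h2.congr fun k => ?_)
  exact (hsol (f k) (hf k) (hfc k)).symm

theorem integrable_mul_of_bdd {n : ℕ} {u g : (𝔼 n) → ℝ} (hu : Integrable u) (hg : Continuous g)
    {C : ℝ} (hC : ∀ x, |g x| ≤ C) : Integrable fun x => u x * g x :=
  hu.mul_bdd (c := C) hg.aestronglyMeasurable (Eventually.of_forall hC)

/-- If `Δu = w` weakly and `ψ = (1 - s² Δ) φ`, then `s² Δ` can be moved from `φ` to `u`. -/
theorem integral_resolvent {n : ℕ} {u w : (𝔼 n) → ℝ} (hu : Integrable u) (hw : Integrable w)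
    (hsol : ∀ φ : (𝔼 n) → ℝ, ContDiff ℝ (⊤ : ℕ∞) φ → HasCompactSupport φ →
      (∫ x, u x * lap φ x) = ∫ x, w x * φ x) {s : ℝ} {φ ψ : 𝓢(𝔼 n, ℝ)}
    (h : ∀ x, φ x - s ^ 2 * lap φ x = ψ x) :
    ∫ x, u x * ψ x = ∫ x, (u x - s ^ 2 * w x) * φ x := by
  have hφ : ∀ x, |φ x| ≤ SchwartzMap.seminorm ℝ 0 0 φ := SchwartzMap.norm_le_seminorm ℝ φ
  have hlφ : ∀ x, |lap φ x| ≤ n * SchwartzMap.seminorm ℝ 0 2 φ := fun x =>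
    (abs_lap_le _ x).trans (by
      gcongr; exact SchwartzMap.norm_iteratedFDeriv_le_seminorm ℝ φ 2 x)
  have i1 := integrable_mul_of_bdd hu φ.continuous hφ
  have i2 := integrable_mul_of_bdd hw φ.continuous hφ
  have i3 := integrable_mul_of_bdd hu (continuous_lap_s2 (φ.smooth 2)) hlφ
  calc ∫ x, u x * ψ x = ∫ x, (u x * φ x - s ^ 2 * (u x * lap φ x)) := by
        congr 1; ext x; rw [← h x]; ring
    _ = ∫ x, (u x * φ x - s ^ 2 * (w x * φ x)) := by
        rw [integral_sub i1 (i3.const_mul _), integral_sub i1 (i2.const_mul _),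
          integral_const_mul, integral_const_mul, weak_schwartz hu hw hsol]
    _ = _ := by congr 1; ext x; ring

/-! ### The `L¹` estimate -/

theorem integral_mul_le {n : ℕ} {u : (𝔼 n) → ℝ} (hu : Integrable u) {φ : (𝔼 n) → ℝ} {M : ℝ}
    (hφ : ∀ x, |φ x| ≤ M) : |∫ x, u x * φ x| ≤ M * ∫ x, |u x| := by
  rw [← Real.norm_eq_abs, mul_comm, ← integral_mul_const]
  refine norm_integral_le_of_norm_le (hu.abs.mul_const M) (Eventually.of_forall fun x => ?_)
  rw [norm_mul]
  exact mul_le_mul_of_nonneg_left (hφ x) (norm_nonneg _)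

/-- The `L¹` norm is computed by duality against test functions bounded by `1`. The near-optimal
test function is a smooth substitute `g / √(g² + η²)` for the sign of `u`, where `g` is a test
function close to `u` in `L¹`. -/
theorem integral_abs_le_of_forall_test {n : ℕ} {u : (𝔼 n) → ℝ} (hu : Integrable u) {K : ℝ}
    (h : ∀ ψ : (𝔼 n) → ℝ, ContDiff ℝ (⊤ : ℕ∞) ψ → HasCompactSupport ψ → (∀ x, |ψ x| ≤ 1) →
      ∫ x, u x * ψ x ≤ K) : ∫ x, |u x| ≤ K := by
  refine le_of_forall_pos_le_add fun δ hδ => ?_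
  obtain ⟨g, hgc, hgs, hg⟩ := (memLp_one_iff_integrable.2 hu).exist_eLpNorm_sub_le
    ENNReal.one_ne_top le_rfl (ε := δ / 3) (by positivity)
  have hgi : Integrable g := hgs.continuous.integrable_of_hasCompactSupport hgc
  have hug : ∫ x, |u x - g x| ≤ δ / 3 := by
    have h1 := integral_norm_eq_lintegral_enorm (hu.sub hgi).1
    have h2 : (∫ x, |u x - g x|) = ∫ x, ‖(u - g) x‖ := rfl
    rw [h2, h1, ← eLpNorm_one_eq_lintegral_enorm]
    exact ENNReal.toReal_le_of_le_ofReal (by positivity) hg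
  set v : ℝ := (volume (tsupport g)).toReal with hv
  have hvfin : volume (tsupport g) ≠ ⊤ := hgc.isCompact.measure_lt_top.ne
  have hv0 : 0 ≤ v := ENNReal.toReal_nonneg
  set η : ℝ := δ / (3 * (v + 1)) with hη
  have hη0 : 0 < η := by positivity
  have hηv : η * v ≤ δ / 3 := by
    rw [hη, div_mul_eq_mul_div, div_le_div_iff₀ (by positivity) (by positivity)]
    nlinarith
  let q : (𝔼 n) → ℝ := fun x => Real.sqrt (g x ^ 2 + η ^ 2)
  have hq2 : ∀ x, q x ^ 2 = g x ^ 2 + η ^ 2 := fun x => Real.sq_sqrt (by positivity)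
  have hq0 : ∀ x, 0 < q x := fun x => Real.sqrt_pos.2 (by positivity)
  have hgq : ∀ x, |g x| ≤ q x := fun x =>
    abs_le_of_sq_le_sq (by nlinarith [hq2 x, sq_nonneg η]) (hq0 x).le
  let ψ : (𝔼 n) → ℝ := fun x => g x * (q x)⁻¹
  have hψ1 : ∀ x, |ψ x| ≤ 1 := fun x => by
    simp only [ψ, abs_mul, abs_inv, abs_of_pos (hq0 x)]
    rw [← div_eq_mul_inv, div_le_one (hq0 x)]
    exact hgq x
  have hψs : ContDiff ℝ (⊤ : ℕ∞) ψ := by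
    refine hgs.mul (ContDiff.inv (ContDiff.sqrt (by fun_prop) fun x => ?_) fun x => (hq0 x).ne')
    positivity
  have hψc : HasCompactSupport ψ := hgc.mul_right
  -- `g ψ = g² / √(g² + η²)` loses at most `η` on the support of `g`
  have hpt : ∀ x, |g x| ≤ g x * ψ x + (tsupport g).indicator (fun _ => η) x := fun x => by
    by_cases hx : x ∈ tsupport g
    · rw [Set.indicator_of_mem hx]
      have : q x ≤ |g x| + η := by
        refine le_of_sq_le_sq ?_ (by positivity)
        rw [hq2]
        nlinarith [sq_abs (g x), abs_nonneg (g x)]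
      have e : g x * ψ x = |g x| ^ 2 / q x := by simp only [ψ, sq_abs]; ring
      rw [e, ← sub_le_iff_le_add, le_div_iff₀ (hq0 x)]
      nlinarith [hq0 x, hgq x, abs_nonneg (g x)]
    · rw [Set.indicator_of_notMem hx, image_eq_zero_of_notMem_tsupport hx]
      simp
  have hgψi : Integrable fun x => g x * ψ x := integrable_mul_of_bdd hgi hψs.continuous hψ1
  have huψi : Integrable fun x => u x * ψ x := integrable_mul_of_bdd hu hψs.continuous hψ1
  have hindi : Integrable ((tsupport g).indicator fun _ => η) :=
    (integrable_indicator_iff (isClosed_tsupport g).measurableSet).2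
      (integrableOn_const hvfin)
  have s1 : ∫ x, |g x| ≤ (∫ x, g x * ψ x) + η * v := by
    refine (integral_mono hgi.abs (hgψi.add hindi) hpt).trans (le_of_eq ?_)
    rw [integral_add' hgψi hindi, integral_indicator (isClosed_tsupport g).measurableSet]
    simp [hv, Measure.real, mul_comm]
  have hugi : Integrable fun x => |u x - g x| := (hu.sub hgi).abs
  have s2 : ∫ x, |u x| ≤ (∫ x, |g x|) + ∫ x, |u x - g x| := by
    rw [← integral_add hgi.abs hugi]
    refine integral_mono hu.abs (hgi.abs.add hugi) fun x => ?_
    simpa using abs_add_le (g x) (u x - g x)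
  have s3 : (∫ x, g x * ψ x) ≤ (∫ x, u x * ψ x) + ∫ x, |u x - g x| := by
    rw [← integral_add huψi hugi]
    refine integral_mono hgψi (huψi.add hugi) fun x => ?_
    have h1 : |(g x - u x) * ψ x| ≤ |u x - g x| := by
      rw [abs_mul, abs_sub_comm]
      exact mul_le_of_le_one_right (abs_nonneg _) (hψ1 x)
    have := (le_abs_self _).trans h1
    nlinarith
  have := h ψ hψs hψc hψ1
  linarith

/-- The operator `s² Δ` is dissipative on `L¹`: if `Δu = w` weakly, then
`‖u‖₁ ≤ ‖u - s² w‖₁`. -/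
theorem integral_abs_le {n : ℕ} {u w : (𝔼 n) → ℝ} (hu : Integrable u) (hw : Integrable w)
    (hsol : ∀ φ : (𝔼 n) → ℝ, ContDiff ℝ (⊤ : ℕ∞) φ → HasCompactSupport φ →
      (∫ x, u x * lap φ x) = ∫ x, w x * φ x) (s : ℝ) :
    ∫ x, |u x| ≤ ∫ x, |u x - s ^ 2 * w x| := by
  refine integral_abs_le_of_forall_test hu fun ψ hψ hψc hψ1 => ?_
  let Ψ : 𝓢(𝔼 n, ℝ) := hψc.toSchwartzMap hψ
  obtain ⟨h, -, -, hres⟩ := exists_resolvent Ψ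
  obtain ⟨φ, hφ, -⟩ := hres s
  have hφ1 := max_principle_abs s 1 φ fun x => by rw [hφ x]; exact hψ1 x
  have e : ∫ x, u x * ψ x = ∫ x, (u x - s ^ 2 * w x) * φ x := integral_resolvent hu hw hsol hφ
  rw [e]
  have := integral_mul_le (hu.sub (hw.const_mul (s ^ 2))) hφ1
  rw [one_mul] at this
  exact (le_abs_self _).trans this

/-- Liouville theorem: an integrable weakly harmonic function vanishes. Testing with the solution of
`φ - k² Δφ = ψ` gives `∫ u ψ = ∫ u φ`, and `φ → 0` uniformly as `k → ∞`. -/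
theorem harmonic_L1 {n : ℕ} (hn : 1 ≤ n) {u : (𝔼 n) → ℝ} (hu : Integrable u)
    (hsol : ∀ φ : (𝔼 n) → ℝ, ContDiff ℝ (⊤ : ℕ∞) φ → HasCompactSupport φ →
      (∫ x, u x * lap φ x) = 0) : u =ᵐ[volume] 0 := by
  have : Nontrivial (𝔼 n) := by
    have : Nonempty (Fin n) := ⟨⟨0, hn⟩⟩
    infer_instance
  refine ae_eq_zero_of_integral_contDiff_smul_eq_zero hu.locallyIntegrable fun ψ hψ hψc => ?_
  let Ψ : 𝓢(𝔼 n, ℝ) := hψc.toSchwartzMap hψ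
  obtain ⟨h, hi, h0, hres⟩ := exists_resolvent Ψ
  let c : ℕ → ℝ := fun k => ∫ ξ, (1 + ‖(2 * Real.pi * (k : ℝ)) • ξ‖ ^ 2)⁻¹ * h ξ
  have hle : ∀ k : ℕ, |∫ x, u x * ψ x| ≤ c k * ∫ x, |u x| := fun k => by
    obtain ⟨φ, hφ, hφc⟩ := hres k
    have e : ∫ x, u x * ψ x = ∫ x, (u x - (k : ℝ) ^ 2 * (0 : ℝ)) * φ x :=
      integral_resolvent (w := fun _ => 0) hu (integrable_zero _ _ _)
        (by simpa using hsol) hφ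
    rw [e]
    simpa using integral_mul_le hu hφc
  have hc : Tendsto c atTop (𝓝 0) := by
    have : Tendsto c atTop (𝓝 (∫ _ : 𝔼 n, (0 : ℝ))) := by
      refine tendsto_integral_of_dominated_convergence h (fun k => ?_) hi (fun k => ?_) ?_
      · exact ((mult_growth _).1.continuous.aestronglyMeasurable).mul hi.1
      · refine Eventually.of_forall fun ξ => ?_
        have h1 : (1 + ‖(2 * Real.pi * (k : ℝ)) • ξ‖ ^ 2)⁻¹ ≤ 1 :=
          inv_le_one_of_one_le₀ (by simp)
        rw [Real.norm_of_nonneg (mul_nonneg (by positivity) (h0 ξ))]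
        exact mul_le_of_le_one_left (h0 ξ) h1
      -- points are null sets because `n ≥ 1`
      · have hne : ∀ᵐ ξ : 𝔼 n, ξ ≠ 0 := by
          simp [ae_iff, measure_singleton]
        filter_upwards [hne] with ξ hξ
        rw [← zero_mul (h ξ)]
        refine Tendsto.mul_const _ (tendsto_inv_atTop_zero.comp ?_)
        refine tendsto_atTop_add_const_left _ _ ?_
        have h3 : 0 < 2 * Real.pi * ‖ξ‖ := by positivity
        refine (tendsto_pow_atTop two_ne_zero).comp
          ((tendsto_natCast_atTop_atTop.const_mul_atTop h3).congr fun k => ?_)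
        rw [norm_smul, Real.norm_of_nonneg (by positivity)]
        ring
    simpa using this
  have hz : |∫ x, u x * ψ x| ≤ 0 := by
    have := ge_of_tendsto' (hc.mul_const (∫ x, |u x|)) hle
    simpa using this
  simpa [mul_comm] using hz

/-! ### Vanishing of the potential term and conclusion -/

/-- The inequality `‖u‖₁ ≤ ‖u - Vu / k‖₁` says `0 ≤ ∫ (|k u - V u| - k |u|)`. The integrand is
bounded by `|V u|` and equals `-|V u|` as soon as `k ≥ V`, so the limit `k → ∞` forces `Vu = 0`. -/
theorem potential_term_zero {n : ℕ} {V u : (𝔼 n) → ℝ} (hV0 : ∀ x, 0 ≤ V x) (hu : Integrable u)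
    (hVu : Integrable fun x => V x * u x)
    (h : ∀ s : ℝ, ∫ x, |u x| ≤ ∫ x, |u x - s ^ 2 * (V x * u x)|) :
    (fun x => V x * u x) =ᵐ[volume] 0 := by
  let F : ℕ → (𝔼 n) → ℝ := fun k x => |k * u x - V x * u x| - k * |u x|
  have hFi : ∀ k, Integrable (F k) := fun k =>
    ((hu.const_mul _).sub hVu).abs.sub (hu.abs.const_mul _)
  have hF0 : ∀ k ≥ 1, 0 ≤ ∫ x, F k x := fun k hk => by
    have hk' : (0 : ℝ) < k := by exact_mod_cast hk
    have h1 := h (Real.sqrt (k : ℝ)⁻¹)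
    rw [Real.sq_sqrt (by positivity)] at h1
    have h2 := mul_le_mul_of_nonneg_left h1 hk'.le
    have i1 : Integrable fun x => |k * u x - V x * u x| := ((hu.const_mul _).sub hVu).abs
    simp only [F]
    rw [integral_sub i1 (hu.abs.const_mul _), integral_const_mul, sub_nonneg]
    refine h2.trans (le_of_eq ?_)
    rw [← integral_const_mul]
    congr 1
    ext x
    rw [← abs_of_pos hk', ← abs_mul, abs_of_pos hk', mul_sub, mul_inv_cancel_left₀ hk'.ne']
  have hlim : Tendsto (fun k => ∫ x, F k x) atTop (𝓝 (∫ x, -|V x * u x|)) := by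
    refine tendsto_integral_of_dominated_convergence (fun x => |V x * u x|)
      (fun k => (hFi k).1) hVu.abs (fun k => Eventually.of_forall fun x => ?_)
      (Eventually.of_forall fun x => tendsto_const_nhds.congr' ?_)
    · have := abs_abs_sub_abs_le_abs_sub (k * u x - V x * u x) (k * u x)
      simpa [F, abs_mul] using this
    · filter_upwards [tendsto_natCast_atTop_atTop.eventually_ge_atTop (V x)] with k hk
      have : (k : ℝ) * u x - V x * u x = (k - V x) * u x := by ring
      simp only [F]
      rw [this, abs_mul, abs_mul, abs_of_nonneg (hV0 x), abs_of_nonneg (sub_nonneg.2 hk)]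
      ring
  have h0 : 0 ≤ ∫ x, -|V x * u x| :=
    ge_of_tendsto hlim (eventually_atTop.2 ⟨1, hF0⟩)
  rw [integral_neg] at h0
  have h1 : ∫ x, |V x * u x| = 0 :=
    le_antisymm (by linarith) (integral_nonneg fun _ => abs_nonneg _)
  have h2 := (integral_eq_zero_iff_of_nonneg (fun _ => abs_nonneg _) hVu.abs).1 h1
  filter_upwards [h2] with x hx
  simpa using hx

/-- **Uniqueness of `L¹` solutions of `-Δu + Vu = 0`** (Euclidean case of
Proposition 5.3): if `u ∈ L¹`, `Vu ∈ L¹` and `u` solves `-Δu + Vu = 0` in the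
distributional sense, then `u = 0` almost everywhere. -/
theorem uniqueness_L1_solutions {n : ℕ} (hn : 1 ≤ n)
    (V u : EuclideanSpace ℝ (Fin n) → ℝ)
    (hV0 : ∀ x, 0 ≤ V x) (hVloc : LocallyIntegrable V volume)
    (hu : Integrable u volume)
    (hVu : Integrable (fun x => V x * u x) volume)
    (hsol : ∀ φ : EuclideanSpace ℝ (Fin n) → ℝ, ContDiff ℝ (⊤ : ℕ∞) φ → HasCompactSupport φ →
      (∫ x, u x * lap φ x) = ∫ x, V x * u x * φ x) :
    u =ᵐ[volume] 0 := by
  have hz := potential_term_zero hV0 hu hVu fun s => integral_abs_le hu hVu hsol s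
  refine harmonic_L1 hn hu fun φ hφ hφc => ?_
  rw [hsol φ hφ hφc]
  refine integral_eq_zero_of_ae ?_
  filter_upwards [hz] with x hx
  simp only [Pi.zero_apply] at hx ⊢
  rw [hx, zero_mul]
end
end

section
/- Subharmonicity of |u|² for weak solutions (Euclidean case). Let n ≥ 1, V a nonnegative locally integrable function on ℝⁿ, Ω ⊆ ℝⁿ open, and let u be a real-valued weak solution of −Δu + Vu = 0 on Ω. Then for every φ ∈ C_c^∞(Ω), ∫_Ω u² Δφ dμ = 2 ∫_Ω (V u² + |∇u|²) φ dμ; in particular, taking nonnegative φ shows that u² is subharmonic on Ω. -/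
/-!
Formally, `∫ u² Δφ = -2 ∫ u ∇u·∇φ`, while testing the weak equation against `u φ` gives
`∫ u ∇u·∇φ + ∫ (V u² + |∇u|²) φ = 0`; the identity follows, and its right-hand side is nonnegative
for `φ ≥ 0`.

Since `u` is only Lipschitz on compact subsets of `Ω`, both steps need an argument. On a compact
neighbourhood in `Ω` of the support of `φ`, the function `u` agrees with a globally Lipschitz `w`
(McShane extension), so all integrals can be written with `w` over the whole space.

* The product `w φ` is Lipschitz but not smooth. Mollifying it gives test functions whose gradients
  are the mollified gradients, hence are uniformly bounded and converge almost everywhere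
  (`exists_smooth_approx`, by Rademacher's theorem and Lebesgue differentiation). Dominated
  convergence, with `V` integrable on compact sets, then allows `w φ` as a test function
  (`weak_eq_of_lipschitz`).
* The first identity is Lipschitz integration by parts in each coordinate direction
  (`integral_sq_mul_lap`).
-/

open MeasureTheory Metric Filter
open scoped ENNReal NNReal RealInnerProductSpace

noncomputable section

/-- `u` is locally Lipschitz on the set `Ω`. -/
def LocLipschitzOn {n : ℕ} (Ω : Set (EuclideanSpace ℝ (Fin n)))
    (u : EuclideanSpace ℝ (Fin n) → ℝ) : Prop :=
  ∀ x ∈ Ω, ∃ (K : ℝ≥0) (t : Set (EuclideanSpace ℝ (Fin n))), t ∈ nhds x ∧ LipschitzOnWith K u t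

/-- `u` is a (locally Lipschitz) weak solution of `-Δu + Vu = 0` on the open set `Ω`:
`Vu²` is locally integrable on `Ω` and `∫_Ω (∇u·∇φ + V u φ) = 0` for every test
function `φ` supported in `Ω`. -/
def IsWeakSol {n : ℕ} (V : EuclideanSpace ℝ (Fin n) → ℝ)
    (Ω : Set (EuclideanSpace ℝ (Fin n))) (u : EuclideanSpace ℝ (Fin n) → ℝ) : Prop :=
  LocLipschitzOn Ω u ∧
  LocallyIntegrableOn (fun x => V x * (u x) ^ 2) Ω volume ∧
  ∀ φ : EuclideanSpace ℝ (Fin n) → ℝ, ContDiff ℝ (⊤ : ℕ∞) φ → HasCompactSupport φ →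
    tsupport φ ⊆ Ω →
    (∫ x in Ω, (⟪gradient u x, gradient φ x⟫ + V x * u x * φ x)) = 0

/-- `f` is subharmonic on the open set `Ω`: `∫ f Δφ ≥ 0` for every nonnegative
test function `φ` supported in `Ω`. -/
def SubharmonicOn {n : ℕ} (Ω : Set (EuclideanSpace ℝ (Fin n)))
    (f : EuclideanSpace ℝ (Fin n) → ℝ) : Prop :=
  ∀ φ : EuclideanSpace ℝ (Fin n) → ℝ, ContDiff ℝ (⊤ : ℕ∞) φ → HasCompactSupport φ →
    tsupport φ ⊆ Ω → (∀ x, 0 ≤ φ x) → 0 ≤ ∫ x in Ω, f x * lap φ x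

/-! ### Integration by parts for Lipschitz functions -/

/-- A product of a Lipschitz function and a compactly supported Lipschitz one is Lipschitz. -/
theorem exists_lipschitzWith_mul {n : ℕ} {w h : EuclideanSpace ℝ (Fin n) → ℝ} {C D : ℝ≥0}
    (hw : LipschitzWith C w) (hh : LipschitzWith D h) (hc : HasCompactSupport h) :
    ∃ K : ℝ≥0, LipschitzWith K (fun x => w x * h x) := by
  obtain ⟨A, hA⟩ := hc.isCompact.exists_bound_of_continuousOn hw.continuous.continuousOn
  obtain ⟨B, hB⟩ := hc.exists_bound_of_continuous hh.continuous
  have hB0 : 0 ≤ B := (norm_nonneg _).trans (hB 0)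
  -- If one of the two points lies in the support of `h`, expand the difference around it.
  have key : ∀ x ∈ tsupport h, ∀ y,
      dist (w x * h x) (w y * h y) ≤ (|A| * D + C * B) * dist x y := by
    intro x hx y
    have h1 : |w x| ≤ |A| := (hA x hx).trans (le_abs_self A)
    have h2 : |h x - h y| ≤ D * dist x y := hh.dist_le_mul x y
    have h3 : |w x - w y| ≤ C * dist x y := hw.dist_le_mul x y
    calc dist (w x * h x) (w y * h y) = |w x * (h x - h y) + (w x - w y) * h y| := by
          rw [Real.dist_eq]; ring_nf
      _ ≤ |w x| * |h x - h y| + |w x - w y| * |h y| := by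
          rw [← abs_mul, ← abs_mul]; exact abs_add_le _ _
      _ ≤ |A| * (D * dist x y) + (C * dist x y) * B := by
          gcongr
          exact hB y
      _ = _ := by ring
  refine ⟨⟨|A| * D + C * B, by positivity⟩, LipschitzWith.of_dist_le_mul fun x y => ?_⟩
  change _ ≤ (|A| * D + C * B) * dist x y
  by_cases hx : x ∈ tsupport h
  · exact key x hx y
  by_cases hy : y ∈ tsupport h
  · rw [dist_comm, dist_comm x]
    exact key y hy x
  · rw [image_eq_zero_of_notMem_tsupport hx, image_eq_zero_of_notMem_tsupport hy]
    simp only [mul_zero, dist_self]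
    positivity

theorem norm_fderiv_apply_le {n : ℕ} {w : EuclideanSpace ℝ (Fin n) → ℝ} {C : ℝ≥0}
    (hw : LipschitzWith C w) (x v : EuclideanSpace ℝ (Fin n)) :
    ‖fderiv ℝ w x v‖ ≤ C * ‖v‖ :=
  ((fderiv ℝ w x).le_opNorm v).trans (by gcongr; exact norm_fderiv_le_of_lipschitz ℝ hw)

theorem measurable_gradient {n : ℕ} (w : EuclideanSpace ℝ (Fin n) → ℝ) :
    Measurable (gradient w) := by
  unfold gradient
  exact (LinearIsometryEquiv.continuous _).measurable.comp (measurable_fderiv ℝ w)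

theorem norm_gradient_le {n : ℕ} {w : EuclideanSpace ℝ (Fin n) → ℝ} {C : ℝ≥0}
    (hw : LipschitzWith C w) (x : EuclideanSpace ℝ (Fin n)) : ‖gradient w x‖ ≤ C := by
  unfold gradient
  rw [LinearIsometryEquiv.norm_map]
  exact norm_fderiv_le_of_lipschitz ℝ hw

theorem integrable_bdd_mul {n : ℕ} {g h : EuclideanSpace ℝ (Fin n) → ℝ} (hg : Measurable g)
    {M : ℝ} (hM : ∀ x, ‖g x‖ ≤ M) (hh : Continuous h) (hc : HasCompactSupport h) :
    Integrable (fun x => g x * h x) :=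
  (hh.integrable_of_hasCompactSupport hc).bdd_mul hg.aestronglyMeasurable (.of_forall hM)

/-- Integration by parts for the square of a Lipschitz function: this is
`∫ ∂ᵥ(w²) h = -∫ w² ∂ᵥh`, obtained from the Lipschitz integration by parts formula applied to `w`
and `w h`, since `w²` itself need not be globally Lipschitz. -/
theorem integral_mul_fderiv_mul {n : ℕ} {w h : EuclideanSpace ℝ (Fin n) → ℝ} {C : ℝ≥0}
    (hw : LipschitzWith C w) (hh : ContDiff ℝ 1 h) (hc : HasCompactSupport h)
    (v : EuclideanSpace ℝ (Fin n)) :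
    2 * ∫ x, w x * fderiv ℝ w x v * h x = - ∫ x, w x ^ 2 * fderiv ℝ h x v := by
  obtain ⟨D, hD⟩ := hh.lipschitzWith_of_hasCompactSupport hc one_ne_zero
  obtain ⟨K, hK⟩ := exists_lipschitzWith_mul hw hD hc
  have hc' : HasCompactSupport (fun x => w x * h x) := hc.mul_left
  have ibp := hw.integral_lineDeriv_mul_eq (μ := volume) hK hc' v
  have hcd : HasCompactSupport (fun x => fderiv ℝ h x v) := hc.fderiv_apply ℝ v
  have hcont : Continuous (fun x => fderiv ℝ h x v) :=
    (hh.continuous_fderiv one_ne_zero).clm_apply continuous_const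
  have hwm : Measurable (fun x => fderiv ℝ w x v) := measurable_fderiv_apply_const ℝ w v
  have i1 : Integrable (fun x => w x * fderiv ℝ w x v * h x) := by
    refine (integrable_bdd_mul hwm (norm_fderiv_apply_le hw · v)
      (hw.continuous.mul hh.continuous) hc.mul_left).congr (.of_forall fun x => ?_)
    simp only [Pi.mul_apply]; ring
  have i2 : Integrable (fun x => w x ^ 2 * fderiv ℝ h x v) :=
    ((hw.continuous.pow 2).mul hcont).integrable_of_hasCompactSupport hcd.mul_left
  have e1 : ∫ x, lineDeriv ℝ w x v * (w x * h x) = ∫ x, w x * fderiv ℝ w x v * h x := by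
    refine integral_congr_ae ?_
    filter_upwards [hw.ae_differentiableAt] with x hx
    rw [hx.lineDeriv_eq_fderiv]; ring
  have e2 : ∫ x, lineDeriv ℝ (fun x => w x * h x) x (-v) * w x =
      ∫ x, (-(w x * fderiv ℝ w x v * h x) - w x ^ 2 * fderiv ℝ h x v) := by
    refine integral_congr_ae ?_
    filter_upwards [hw.ae_differentiableAt] with x hx
    have hhx : DifferentiableAt ℝ h x := hh.differentiable one_ne_zero x
    rw [(hx.fun_mul hhx).lineDeriv_eq_fderiv, fderiv_fun_mul hx hhx]
    simp only [_root_.add_apply, _root_.smul_apply, map_neg,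
      smul_eq_mul]
    ring
  rw [e1, e2, integral_sub i1.fun_neg i2, integral_neg] at ibp
  linarith

theorem inner_gradient_eq_sum {n : ℕ} (w φ : EuclideanSpace ℝ (Fin n) → ℝ)
    (x : EuclideanSpace ℝ (Fin n)) :
    ⟪gradient w x, gradient φ x⟫ = ∑ i : Fin n,
      fderiv ℝ w x (EuclideanSpace.single i 1) * fderiv ℝ φ x (EuclideanSpace.single i 1) := by
  have hg : ∀ (f : EuclideanSpace ℝ (Fin n) → ℝ) v, ⟪gradient f x, v⟫ = fderiv ℝ f x v := by
    intro f v
    simp [gradient]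
  rw [← (EuclideanSpace.basisFun (Fin n) ℝ).sum_inner_mul_inner]
  refine Finset.sum_congr rfl fun i _ => ?_
  rw [real_inner_comm (gradient φ x), hg, hg]
  simp

/-- `∫ w² Δφ = -∫ ∇(w²)·∇φ` for Lipschitz `w`. -/
theorem integral_sq_mul_lap {n : ℕ} {w φ : EuclideanSpace ℝ (Fin n) → ℝ} {C : ℝ≥0}
    (hw : LipschitzWith C w) (hφ : ContDiff ℝ (⊤ : ℕ∞) φ) (hc : HasCompactSupport φ) :
    ∫ x, w x ^ 2 * lap φ x = - (2 * ∫ x, w x * ⟪gradient w x, gradient φ x⟫) := by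
  set e : Fin n → EuclideanSpace ℝ (Fin n) := fun i => EuclideanSpace.single i 1 with he
  have hd : ContDiff ℝ 1 (fderiv ℝ φ) := hφ.fderiv_right (WithTop.coe_le_coe.2 le_top)
  have hh : ∀ i, ContDiff ℝ 1 (fun x => fderiv ℝ φ x (e i)) :=
    fun i => hd.clm_apply contDiff_const
  have hcc : ∀ i, HasCompactSupport (fun x => fderiv ℝ φ x (e i)) :=
    fun i => hc.fderiv_apply ℝ (e i)
  have hcd : ∀ i, HasCompactSupport (fun x => fderiv ℝ (fun y => fderiv ℝ φ y (e i)) x (e i)) :=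
    fun i => (hcc i).fderiv_apply ℝ (e i)
  have hcont : ∀ i, Continuous (fun x => fderiv ℝ (fun y => fderiv ℝ φ y (e i)) x (e i)) :=
    fun i => ((hh i).continuous_fderiv one_ne_zero).clm_apply continuous_const
  have hlap : ∀ x, lap φ x = ∑ i, fderiv ℝ (fun y => fderiv ℝ φ y (e i)) x (e i) := by
    intro x
    refine Finset.sum_congr rfl fun i _ => ?_
    rw [iteratedFDeriv_two_apply, fderiv_clm_apply (hd.differentiable one_ne_zero x)
      (differentiableAt_const _)]
    simp [he]
  have i1 : ∀ i, Integrable (fun x => w x * fderiv ℝ w x (e i) * fderiv ℝ φ x (e i)) := by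
    intro i
    refine (integrable_bdd_mul (measurable_fderiv_apply_const ℝ w (e i))
      (norm_fderiv_apply_le hw · (e i)) (hw.continuous.mul (hh i).continuous)
      (hcc i).mul_left).congr (.of_forall fun x => ?_)
    simp only [Pi.mul_apply]; ring
  have i2 : ∀ i, Integrable
      (fun x => w x ^ 2 * fderiv ℝ (fun y => fderiv ℝ φ y (e i)) x (e i)) := fun i =>
    ((hw.continuous.pow 2).mul (hcont i)).integrable_of_hasCompactSupport (hcd i).mul_left
  have l : ∫ x, w x ^ 2 * lap φ x =
      ∑ i, ∫ x, w x ^ 2 * fderiv ℝ (fun y => fderiv ℝ φ y (e i)) x (e i) := by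
    rw [← integral_finsetSum _ fun i _ => i2 i]
    simp_rw [hlap, Finset.mul_sum]
  have r : ∫ x, w x * ⟪gradient w x, gradient φ x⟫ =
      ∑ i, ∫ x, w x * fderiv ℝ w x (e i) * fderiv ℝ φ x (e i) := by
    rw [← integral_finsetSum _ fun i _ => i1 i]
    simp_rw [inner_gradient_eq_sum, Finset.mul_sum, mul_assoc, he]
  rw [l, r, Finset.mul_sum, ← Finset.sum_neg_distrib]
  refine Finset.sum_congr rfl fun i _ => ?_
  rw [integral_mul_fderiv_mul hw (hh i) (hcc i) (e i), neg_neg]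

/-! ### Mollification of Lipschitz functions -/

section Mollification

open scoped Convolution

theorem norm_normed_convolution_le {n : ℕ} {F : Type*} [NormedAddCommGroup F] [NormedSpace ℝ F]
    (ρ : ContDiffBump (0 : EuclideanSpace ℝ (Fin n))) {g : EuclideanSpace ℝ (Fin n) → F} {M : ℝ}
    (hM : ∀ x, ‖g x‖ ≤ M) (x : EuclideanSpace ℝ (Fin n)) :
    ‖(ρ.normed volume ⋆[ContinuousLinearMap.lsmul ℝ ℝ, volume] g) x‖ ≤ M := by
  rw [convolution_def]
  refine (norm_integral_le_of_norm_le (g := fun t => ρ.normed volume t * M)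
    (ρ.integrable_normed.mul_const M) (.of_forall fun t => ?_)).trans ?_
  · rw [ContinuousLinearMap.lsmul_apply, norm_smul, Real.norm_of_nonneg (ρ.nonneg_normed t)]
    exact mul_le_mul_of_nonneg_left (hM _) (ρ.nonneg_normed t)
  · rw [integral_mul_const, ρ.integral_normed, one_mul]

/-- Mollification commutes with the (almost everywhere defined) derivative of a Lipschitz
function. -/
theorem hasFDerivAt_normed_convolution {n : ℕ}
    (ρ : ContDiffBump (0 : EuclideanSpace ℝ (Fin n))) {ψ : EuclideanSpace ℝ (Fin n) → ℝ}
    {D : ℝ≥0} (hψ : LipschitzWith D ψ) (x : EuclideanSpace ℝ (Fin n)) :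
    HasFDerivAt (ρ.normed volume ⋆[ContinuousLinearMap.lsmul ℝ ℝ, volume] ψ)
      ((ρ.normed volume ⋆[ContinuousLinearMap.lsmul ℝ ℝ, volume] (fderiv ℝ ψ)) x) x := by
  have hcont : ∀ y, Continuous fun t => ρ.normed volume t • ψ (y - t) := fun y =>
    ρ.continuous_normed.smul (hψ.continuous.comp (continuous_const.sub continuous_id))
  refine (hasFDerivAt_integral_of_dominated_loc_of_lip' (s := Set.univ)
    (F := fun y t => ρ.normed volume t • ψ (y - t))
    (F' := fun t => ρ.normed volume t • fderiv ℝ ψ (x - t))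
    (bound := fun t => ρ.normed volume t * D) univ_mem
    (fun y _ => (hcont y).aestronglyMeasurable)
    ((hcont x).integrable_of_hasCompactSupport ρ.hasCompactSupport_normed.smul_right)
    ?_ ?_ (ρ.integrable_normed.mul_const _) ?_).2
  · exact ρ.continuous_normed.aestronglyMeasurable.smul
      ((measurable_fderiv ℝ ψ).comp (measurable_const.sub measurable_id)).aestronglyMeasurable
  · refine .of_forall fun t y _ => ?_
    rw [← smul_sub, norm_smul, Real.norm_of_nonneg (ρ.nonneg_normed t), mul_assoc]
    refine mul_le_mul_of_nonneg_left ?_ (ρ.nonneg_normed t)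
    simpa using hψ.norm_sub_le (y - t) (x - t)
  · filter_upwards [(quasiMeasurePreserving_sub_left volume x).ae hψ.ae_differentiableAt]
      with t ht
    have h1 : HasFDerivAt (fun y => ψ (y - t)) (fderiv ℝ ψ (x - t)) x := by
      have h := ht.hasFDerivAt.comp x ((hasFDerivAt_id x).sub_const t)
      rwa [ContinuousLinearMap.comp_id] at h
    exact h1.const_smul (ρ.normed volume t)

/-- A compactly supported Lipschitz function is a limit of test functions with supports in a
prescribed neighbourhood of its support, with uniform bounds on values and gradients, where the
values converge everywhere and the gradients almost everywhere. -/
theorem exists_smooth_approx {n : ℕ} {ψ : EuclideanSpace ℝ (Fin n) → ℝ} {D : ℝ≥0}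
    (hψ : LipschitzWith D ψ) (hc : HasCompactSupport ψ) {δ : ℝ} (hδ : 0 < δ) :
    ∃ (Ψ : ℕ → EuclideanSpace ℝ (Fin n) → ℝ) (M : ℝ),
      (∀ k, ContDiff ℝ (⊤ : ℕ∞) (Ψ k)) ∧
      (∀ k, tsupport (Ψ k) ⊆ cthickening δ (tsupport ψ)) ∧
      (∀ k x, ‖Ψ k x‖ ≤ M) ∧ (∀ k x, ‖gradient (Ψ k) x‖ ≤ D) ∧
      (∀ x, Tendsto (fun k => Ψ k x) atTop (nhds (ψ x))) ∧
      ∀ᵐ x, Tendsto (fun k => gradient (Ψ k) x) atTop (nhds (gradient ψ x)) := by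
  obtain ⟨M, hM⟩ := hc.exists_bound_of_continuous hψ.continuous
  have hr : ∀ k : ℕ, 0 < δ / (k + 1) := fun k => by positivity
  let ρ : ℕ → ContDiffBump (0 : EuclideanSpace ℝ (Fin n)) := fun k =>
    ⟨δ / (k + 1) / 2, δ / (k + 1), half_pos (hr k), half_lt_self (hr k)⟩
  have hρ0 : Tendsto (fun k => (ρ k).rOut) atTop (nhds 0) :=
    ((tendsto_const_div_atTop_nhds_zero_nat δ).comp (tendsto_add_atTop_nat 1)).congr
      fun k => by simp [ρ]
  have hρδ : ∀ k, (ρ k).rOut ≤ δ := fun k =>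
    div_le_self hδ.le (by linarith [(Nat.cast_nonneg k : (0 : ℝ) ≤ k)])
  have hloc : LocallyIntegrable (fderiv ℝ ψ) (volume : Measure (EuclideanSpace ℝ (Fin n))) := by
    refine (locallyIntegrable_const (D : ℝ)).mono
      (measurable_fderiv ℝ ψ).aestronglyMeasurable (.of_forall fun x => ?_)
    rw [Real.norm_of_nonneg D.coe_nonneg]
    exact norm_fderiv_le_of_lipschitz ℝ hψ
  have hgrad : ∀ k x, fderiv ℝ
      ((ρ k).normed volume ⋆[ContinuousLinearMap.lsmul ℝ ℝ, volume] ψ) x =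
      ((ρ k).normed volume ⋆[ContinuousLinearMap.lsmul ℝ ℝ, volume] (fderiv ℝ ψ)) x :=
    fun k x => (hasFDerivAt_normed_convolution (ρ k) hψ x).fderiv
  refine ⟨fun k => (ρ k).normed volume ⋆[ContinuousLinearMap.lsmul ℝ ℝ, volume] ψ, M,
    fun k => ?_, fun k => ?_, fun k => norm_normed_convolution_le (ρ k) hM, fun k x => ?_,
    ContDiffBump.convolution_tendsto_right_of_continuous hρ0 hψ.continuous, ?_⟩
  · exact (ρ k).hasCompactSupport_normed.contDiff_convolution_left _ (ρ k).contDiff_normed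
      hψ.continuous.locallyIntegrable
  · refine closure_minimal (fun x hx => ?_) isClosed_cthickening
    obtain ⟨a, ha, b, hb, rfl⟩ := support_convolution_subset _ hx
    rw [(ρ k).support_normed_eq, mem_ball_zero_iff] at ha
    refine mem_cthickening_of_dist_le _ b _ _ (subset_tsupport _ hb) ?_
    simpa using ha.le.trans (hρδ k)
  · unfold gradient
    rw [LinearIsometryEquiv.norm_map, hgrad]
    exact norm_normed_convolution_le (ρ k) (fun y => norm_fderiv_le_of_lipschitz ℝ hψ) x
  · filter_upwards [ContDiffBump.ae_convolution_tendsto_right_of_locallyIntegrable (K := 2) hρ0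
      (.of_forall fun k => (mul_div_cancel₀ _ two_ne_zero).ge) hloc] with x hx
    unfold gradient
    simp_rw [hgrad]
    exact ((LinearIsometryEquiv.continuous _).tendsto _).comp hx

end Mollification

/-! ### Lipschitz test functions -/

theorem gradient_of_notMem_tsupport {n : ℕ} {φ : EuclideanSpace ℝ (Fin n) → ℝ}
    {x : EuclideanSpace ℝ (Fin n)} (hx : x ∉ tsupport φ) : gradient φ x = 0 := by
  rw [gradient, fderiv_of_notMem_tsupport ℝ hx, map_zero]

/-- The weak equation may be tested against a compactly supported Lipschitz function `ψ`. Near the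
support of `ψ` the solution `u` is replaced by a globally Lipschitz function `w`. -/
theorem weak_eq_of_lipschitz {n : ℕ} {V u w ψ : EuclideanSpace ℝ (Fin n) → ℝ}
    {Ω : Set (EuclideanSpace ℝ (Fin n))} {C D : ℝ≥0} {δ : ℝ}
    (hV : LocallyIntegrable V volume) (hu : IsWeakSol V Ω u)
    (hw : LipschitzWith C w) (hψ : LipschitzWith D ψ) (hc : HasCompactSupport ψ)
    (hδ : 0 < δ) (hδΩ : cthickening δ (tsupport ψ) ⊆ Ω)
    (huw : Set.EqOn u w (cthickening δ (tsupport ψ))) :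
    ∫ x, (⟪gradient w x, gradient ψ x⟫ + V x * w x * ψ x) = 0 := by
  obtain ⟨Ψ, M, hΨ, hsupp, hM, hD, hlim, hglim⟩ := exists_smooth_approx hψ hc (half_pos hδ)
  set S := cthickening δ (tsupport ψ) with hS
  have hSc : IsCompact S := IsCompact.cthickening hc
  have hsub : cthickening (δ / 2) (tsupport ψ) ⊆ S := cthickening_mono (by linarith) _
  obtain ⟨W, hW⟩ := hSc.exists_bound_of_continuousOn hw.continuous.continuousOn
  have hM0 : 0 ≤ M := (norm_nonneg _).trans (hM 0 0)
  have hzero : ∀ k x, x ∉ S → Ψ k x = 0 ∧ gradient (Ψ k) x = 0 := fun k x hx =>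
    have hx' : x ∉ tsupport (Ψ k) := fun h => hx (hsub (hsupp k h))
    ⟨image_eq_zero_of_notMem_tsupport hx', gradient_of_notMem_tsupport hx'⟩
  have hk : ∀ k, ∫ x, (⟪gradient w x, gradient (Ψ k) x⟫ + V x * w x * Ψ k x) = 0 := by
    intro k
    rw [← hu.2.2 (Ψ k) (hΨ k) (hSc.of_isClosed_subset (isClosed_tsupport _)
      ((hsupp k).trans hsub)) (((hsupp k).trans hsub).trans hδΩ),
      ← setIntegral_eq_integral_of_forall_compl_eq_zero (s := Ω)]
    · congr 1
      funext x
      by_cases hx : x ∈ tsupport (Ψ k)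
      · have hmem : S ∈ nhds x := Filter.mem_of_superset
          (isOpen_thickening.mem_nhds (cthickening_subset_thickening' hδ (by linarith) _
            (hsupp k hx))) (thickening_subset_cthickening δ _)
        have heq : u =ᶠ[nhds x] w := Filter.mem_of_superset hmem huw
        have hg : gradient u x = gradient w x := congrArg _ heq.fderiv_eq
        rw [hg, heq.eq_of_nhds]
      · rw [image_eq_zero_of_notMem_tsupport hx, gradient_of_notMem_tsupport hx]
        simp
    · intro x hx
      obtain ⟨h1, h2⟩ := hzero k x (fun h => hx (hδΩ h))
      simp [h1, h2]
  -- `w` and `Ψ k` are controlled on `S` only, and `Ψ k` vanishes off `S`.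
  have hlimit := tendsto_integral_of_dominated_convergence (μ := volume)
    (F := fun k x => ⟪gradient w x, gradient (Ψ k) x⟫ + V x * w x * Ψ k x)
    (f := fun x => ⟪gradient w x, gradient ψ x⟫ + V x * w x * ψ x)
    (S.indicator fun x => (C * D + ‖V x‖ * (W * M) : ℝ)) ?_ ?_ ?_ ?_
  · simp_rw [hk] at hlimit
    exact tendsto_nhds_unique hlimit tendsto_const_nhds
  · intro k
    exact ((measurable_gradient w).inner (measurable_gradient (Ψ k))).aestronglyMeasurable.add
      ((hV.aestronglyMeasurable.mul hw.continuous.aestronglyMeasurable).mul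
        (hΨ k).continuous.aestronglyMeasurable)
  · rw [integrable_indicator_iff hSc.measurableSet]
    exact (continuous_const.continuousOn.integrableOn_compact hSc).add
      ((hV.integrableOn_isCompact hSc).norm.mul_const _)
  · refine fun k => .of_forall fun x => ?_
    by_cases hx : x ∈ S
    · rw [Set.indicator_of_mem hx]
      refine (norm_add_le _ _).trans (add_le_add ?_ ?_)
      · refine (norm_inner_le_norm _ _).trans ?_
        gcongr
        · exact norm_gradient_le hw x
        · exact hD k x
      · rw [norm_mul, norm_mul, mul_assoc]
        have hW0 : 0 ≤ W := (norm_nonneg _).trans (hW x hx)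
        gcongr
        · exact hW x hx
        · exact hM k x
    · obtain ⟨h1, h2⟩ := hzero k x hx
      simp [h1, h2, hx]
  · filter_upwards [hglim] with x hx
    exact (tendsto_const_nhds.inner hx).add ((hlim x).const_mul _)

theorem gradient_mul {n : ℕ} {w φ : EuclideanSpace ℝ (Fin n) → ℝ} {x : EuclideanSpace ℝ (Fin n)}
    (hw : DifferentiableAt ℝ w x) (hφ : DifferentiableAt ℝ φ x) :
    gradient (fun y => w y * φ y) x = w x • gradient φ x + φ x • gradient w x := by
  simp only [gradient, fderiv_fun_mul hw hφ, map_add, map_smul]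

/-! ### The identity for the square -/

/-- **Subharmonicity of `u²` for weak solutions** (equation (8.1), Euclidean case):
if `u` is a weak solution of `-Δu + Vu = 0` on the open set `Ω`, then
`∫_Ω u² Δφ = 2 ∫_Ω (V u² + |∇u|²) φ` for every test function `φ` supported in `Ω`;
in particular `u²` is subharmonic on `Ω`. -/
theorem subharmonicity_of_square {n : ℕ} (hn : 1 ≤ n)
    (V : EuclideanSpace ℝ (Fin n) → ℝ)
    (hV0 : ∀ x, 0 ≤ V x) (hVloc : LocallyIntegrable V volume)
    (Ω : Set (EuclideanSpace ℝ (Fin n))) (hΩ : IsOpen Ω)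
    (u : EuclideanSpace ℝ (Fin n) → ℝ) (hu : IsWeakSol V Ω u) :
    (∀ φ : EuclideanSpace ℝ (Fin n) → ℝ, ContDiff ℝ (⊤ : ℕ∞) φ → HasCompactSupport φ →
      tsupport φ ⊆ Ω →
      (∫ x in Ω, (u x) ^ 2 * lap φ x)
        = 2 * ∫ x in Ω, (V x * (u x) ^ 2 + ‖gradient u x‖ ^ 2) * φ x) ∧
    SubharmonicOn Ω (fun x => (u x) ^ 2) := by
  obtain ⟨hlip, -, -⟩ := id hu
  have main : ∀ φ : EuclideanSpace ℝ (Fin n) → ℝ, ContDiff ℝ (⊤ : ℕ∞) φ → HasCompactSupport φ →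
      tsupport φ ⊆ Ω →
      (∫ x in Ω, (u x) ^ 2 * lap φ x)
        = 2 * ∫ x in Ω, (V x * (u x) ^ 2 + ‖gradient u x‖ ^ 2) * φ x := by
    intro φ hφ hc hsupp
    obtain ⟨δ, hδ, hδΩ⟩ := IsCompact.exists_cthickening_subset_open hc hΩ hsupp
    have hSc : IsCompact (cthickening δ (tsupport φ)) := IsCompact.cthickening hc
    obtain ⟨C, hC⟩ := LocallyLipschitzOn.exists_lipschitzOnWith_of_compact (f := u) hSc
      fun x hx => by
        obtain ⟨K, t, ht, hK⟩ := hlip x (hδΩ hx)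
        exact ⟨K, t, mem_nhdsWithin_of_mem_nhds ht, hK⟩
    obtain ⟨w, hw, huw⟩ := hC.extend_real
    obtain ⟨D, hD⟩ := hφ.lipschitzWith_of_hasCompactSupport hc (by simp)
    obtain ⟨K, hK⟩ := exists_lipschitzWith_mul hw hD hc
    have hcw : HasCompactSupport fun x => w x * φ x := hc.mul_left
    have hss : cthickening δ (tsupport fun x => w x * φ x) ⊆ cthickening δ (tsupport φ) :=
      cthickening_subset_of_subset δ (tsupport_mul_subset_right (f := w))
    have hweak := weak_eq_of_lipschitz hVloc hu hw hK hcw hδ (hss.trans hδΩ) (huw.mono hss)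
    have hnhds : ∀ x ∈ tsupport φ, u =ᶠ[nhds x] w := fun x hx =>
      Filter.mem_of_superset (isOpen_thickening.mem_nhds (self_subset_thickening hδ _ hx))
        ((thickening_subset_cthickening δ _).trans huw)
    have hφd : Continuous fun x => gradient φ x :=
      (LinearIsometryEquiv.continuous _).comp (hφ.continuous_fderiv (by simp))
    have hlap0 : ∀ x, x ∉ tsupport φ → lap φ x = 0 := by
      intro x hx
      have hx' : x ∉ tsupport (iteratedFDeriv ℝ 2 φ) := fun h =>
        hx (tsupport_iteratedFDeriv_subset 2 h)
      simp [lap, image_eq_zero_of_notMem_tsupport hx']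
    have hl : ∫ x in Ω, (u x) ^ 2 * lap φ x = ∫ x, (w x) ^ 2 * lap φ x := by
      rw [← setIntegral_eq_integral_of_forall_compl_eq_zero (s := Ω) (μ := volume)
        (f := fun x => w x ^ 2 * lap φ x) (fun x hx => by rw [hlap0 x fun h => hx (hsupp h), mul_zero])]
      congr 1
      funext x
      by_cases hx : x ∈ tsupport φ
      · rw [(hnhds x hx).eq_of_nhds]
      · rw [hlap0 x hx, mul_zero, mul_zero]
    have hr : ∫ x in Ω, (V x * (u x) ^ 2 + ‖gradient u x‖ ^ 2) * φ x =
        ∫ x, (V x * (w x) ^ 2 + ‖gradient w x‖ ^ 2) * φ x := by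
      rw [← setIntegral_eq_integral_of_forall_compl_eq_zero (s := Ω) (μ := volume)
        (f := fun x => (V x * w x ^ 2 + ‖gradient w x‖ ^ 2) * φ x) (fun x hx => by
        rw [image_eq_zero_of_notMem_tsupport fun h => hx (hsupp h), mul_zero])]
      congr 1
      funext x
      by_cases hx : x ∈ tsupport φ
      · have hg : gradient u x = gradient w x := congrArg _ (hnhds x hx).fderiv_eq
        rw [hg, (hnhds x hx).eq_of_nhds]
      · rw [image_eq_zero_of_notMem_tsupport hx, mul_zero, mul_zero]
    have hgc : HasCompactSupport fun x => ‖gradient φ x‖ :=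
      .intro hc fun x hx => by rw [gradient_of_notMem_tsupport hx, norm_zero]
    have i1 : Integrable fun x => w x * ⟪gradient w x, gradient φ x⟫ := by
      refine (((hw.continuous.norm.mul hφd.norm).integrable_of_hasCompactSupport
        hgc.mul_left).const_mul (C : ℝ)).mono'
        (hw.continuous.measurable.mul
          ((measurable_gradient w).inner (measurable_gradient φ))).aestronglyMeasurable
        (.of_forall fun x => ?_)
      rw [norm_mul]
      calc ‖w x‖ * ‖⟪gradient w x, gradient φ x⟫‖ ≤ ‖w x‖ * (C * ‖gradient φ x‖) := by
            gcongr
            refine (norm_inner_le_norm _ _).trans ?_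
            gcongr
            exact norm_gradient_le hw x
        _ = _ := by simp only [Pi.mul_apply]; ring
    have i2 : Integrable fun x => (V x * (w x) ^ 2 + ‖gradient w x‖ ^ 2) * φ x := by
      have h1 := hVloc.integrable_smul_right_of_hasCompactSupport
        ((hw.continuous.pow 2).mul hφ.continuous) hc.mul_left
      have h2 := integrable_bdd_mul ((measurable_gradient w).norm.pow_const 2) (M := C ^ 2)
        (fun x => by
          rw [norm_pow, norm_norm]
          gcongr
          exact norm_gradient_le hw x) hφ.continuous hc
      refine (h1.add h2).congr (.of_forall fun x => ?_)
      simp only [Pi.add_apply, Pi.mul_apply, smul_eq_mul, Pi.pow_apply]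
      ring
    -- The weak equation tested against `w φ`, with its gradient expanded by the product rule.
    have hsum : (∫ x, w x * ⟪gradient w x, gradient φ x⟫) +
        ∫ x, (V x * (w x) ^ 2 + ‖gradient w x‖ ^ 2) * φ x = 0 := by
      rw [← integral_add i1 i2, ← hweak]
      refine integral_congr_ae ?_
      filter_upwards [hw.ae_differentiableAt] with x hx
      rw [gradient_mul hx (hφ.differentiable (by simp) x), inner_add_right, inner_smul_right,
        inner_smul_right, real_inner_self_eq_norm_sq]
      ring
    rw [hl, hr, integral_sq_mul_lap hw hφ hc]
    linarith
  refine ⟨main, fun φ hφ hc hsupp h0 => ?_⟩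
  rw [main φ hφ hc hsupp]
  refine mul_nonneg zero_le_two (integral_nonneg fun x => ?_)
  exact mul_nonneg (add_nonneg (mul_nonneg (hV0 x) (sq_nonneg _)) (sq_nonneg _)) (h0 x)
end
end

section
/- Mean value inequality for subharmonic functions with small exponents (Euclidean case). Let n ≥ 1, 0 < r < ∞ and 1 < η ≤ 4. Then there is a constant C, depending only on n, r, η, such that for every x₀ ∈ ℝⁿ, R > 0, and every nonnegative continuous subharmonic function f on an open set containing the closed ball B̄(x₀, 4R), sup_{x ∈ B(x₀,R)} f(x) ≤ C ( ⨍_{B(x₀,ηR)} f^r dμ )^{1/r}. -/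
/-!
Fix a smooth nonincreasing profile `G ≥ 0` on `ℝ` vanishing on `[1, ∞)` and let `k y = -2 G'(‖y‖²)`,
a nonnegative radial kernel supported in the unit ball. The derivative in `s` of the rescaled kernel
`s⁻ⁿ k((x - z)/s)` is exactly `s¹⁻ⁿ` times the Laplacian of the test function
`x ↦ G(‖x - z‖² / s²)` (`kern_scaled_hasDerivAt`). Testing subharmonicity against this function
shows that the averages of `f` against the rescaled kernels are nondecreasing in `s`
(`avg_monotoneOn`). As `s → 0` they tend to `f z ∫ k`, by continuity of `f`, and at `s = ρ` they are
at most `(sup k) ρ⁻ⁿ ∫_{B(z,ρ)} f`; this is the sub-mean value inequality with a dimensional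
constant (`exists_submean`).

For the exponent `r`, let `z` maximize `f(y)^r d(y)ⁿ` over the closed ball `B(x₀, ηR)`, where
`d(y) = ηR - |y - x₀|`. On `B(z, d(z)/2)` the function `f` is at most `2^(n/r) f(z)`, so there
`f ≤ ε f(z) + K f(z)^(1-r) f^r` for any `ε > 0` (`le_add_rpow`). Inserting this into the sub-mean
value inequality on that ball and absorbing the `ε` term yields `f(z)^r d(z)ⁿ ≤ C ∫ f^r`. Since
`d ≥ (η - 1) R` on `B(x₀, R)`, the maximality of `z` gives the claim. No distinction between `r < 1`
and `r ≥ 1` is needed.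
-/

open MeasureTheory Metric Filter
open scoped ENNReal NNReal

noncomputable section

/-! ### The kernel and its test functions -/

/-- A smooth, nonincreasing profile on `ℝ`, positive on `(-∞, 1)` and zero on `[1, ∞)`. The test
functions are `x ↦ prof (‖x - z‖² / s²)`. -/
def prof (t : ℝ) : ℝ := expNegInvGlue (1 - t)

lemma prof_contDiff : ContDiff ℝ (⊤ : ℕ∞) prof :=
  expNegInvGlue.contDiff.comp (contDiff_const.sub contDiff_id)

lemma prof_nonneg (t : ℝ) : 0 ≤ prof t := expNegInvGlue.nonneg _

lemma prof_zero {t : ℝ} (ht : 1 ≤ t) : prof t = 0 :=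
  expNegInvGlue.zero_of_nonpos (by linarith)

lemma prof_anti : Antitone prof := fun _ _ h => expNegInvGlue.monotone (by linarith)

lemma dprof_contDiff : ContDiff ℝ (⊤ : ℕ∞) (deriv prof) :=
  (contDiff_infty_iff_deriv.1 prof_contDiff).2

lemma ddprof_contDiff : ContDiff ℝ (⊤ : ℕ∞) (deriv (deriv prof)) :=
  (contDiff_infty_iff_deriv.1 dprof_contDiff).2

lemma prof_hasDerivAt (t : ℝ) : HasDerivAt prof (deriv prof t) t :=
  ((prof_contDiff.differentiable (by simp)) t).hasDerivAt

lemma dprof_hasDerivAt (t : ℝ) : HasDerivAt (deriv prof) (deriv (deriv prof) t) t :=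
  ((dprof_contDiff.differentiable (by simp)) t).hasDerivAt

lemma dprof_nonpos (t : ℝ) : deriv prof t ≤ 0 := prof_anti.deriv_nonpos

lemma dprof_zero {t : ℝ} (ht : 1 ≤ t) : deriv prof t = 0 := by
  -- `prof` attains its minimum `0` at `t`, which also covers the endpoint `t = 1`
  have : IsLocalMin prof t := Filter.Eventually.of_forall fun u => by
    rw [prof_zero ht]; exact prof_nonneg u
  exact this.deriv_eq_zero

lemma ddprof_zero {t : ℝ} (ht : 1 < t) : deriv (deriv prof) t = 0 := by
  have h : deriv prof =ᶠ[nhds t] fun _ => 0 := by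
    filter_upwards [lt_mem_nhds ht] with u hu using dprof_zero hu.le
  rw [h.deriv_eq]; simp

lemma exists_dprof_ne : ∃ t : ℝ, 0 ≤ t ∧ deriv prof t ≠ 0 := by
  by_contra! h
  have h0 : prof 0 ≠ prof 1 := by
    rw [prof_zero le_rfl]
    exact (expNegInvGlue.pos_of_pos (by norm_num)).ne'
  obtain ⟨c, hc, hc'⟩ := exists_deriv_eq_slope prof (zero_lt_one)
    prof_contDiff.continuous.continuousOn (prof_contDiff.differentiable (by simp)).differentiableOn
  rw [h c hc.1.le] at hc'
  apply h0
  simp at hc'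
  linarith

/-- The radial kernel `y ↦ -2 G'(‖y‖²)`, with `G = prof`. -/
def kern {n : ℕ} (y : EuclideanSpace ℝ (Fin n)) : ℝ := -2 * deriv prof (‖y‖ ^ 2)

lemma kern_cont {n : ℕ} : Continuous (kern (n := n)) := by
  have := dprof_contDiff.continuous
  unfold kern; fun_prop

lemma kern_nonneg {n : ℕ} (y : EuclideanSpace ℝ (Fin n)) : 0 ≤ kern y := by
  have := dprof_nonpos (‖y‖ ^ 2)
  unfold kern; linarith

lemma kern_zero {n : ℕ} {y : EuclideanSpace ℝ (Fin n)} (hy : 1 ≤ ‖y‖) : kern y = 0 := by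
  unfold kern; rw [dprof_zero (by nlinarith)]; simp

lemma kern_compact {n : ℕ} : HasCompactSupport (kern (n := n)) :=
  HasCompactSupport.intro (isCompact_closedBall 0 1) fun y hy => kern_zero (by
    simp at hy; exact hy.le)

lemma kern_integral_pos {n : ℕ} (hn : 1 ≤ n) : 0 < ∫ y, kern (n := n) y := by
  obtain ⟨t, ht0, ht⟩ := exists_dprof_ne
  refine kern_cont.integral_pos_of_hasCompactSupport_nonneg_nonzero kern_compact kern_nonneg
    (x := EuclideanSpace.single ⟨0, hn⟩ (√t)) ?_
  simp [kern, Real.sq_sqrt ht0, ht]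

lemma kern_bdd {n : ℕ} : ∃ A, 0 < A ∧ ∀ y : EuclideanSpace ℝ (Fin n), kern y ≤ A := by
  obtain ⟨A, hA⟩ := kern_compact.exists_bound_of_continuous (kern_cont (n := n))
  refine ⟨max A 1, by positivity, fun y => ?_⟩
  exact (le_abs_self _).trans ((hA y).trans (le_max_left _ _))

lemma kern_arg {n : ℕ} (z x : EuclideanSpace ℝ (Fin n)) {s : ℝ} (hs : 0 < s) :
    ‖s⁻¹ • (x - z)‖ ^ 2 = ‖x - z‖ ^ 2 / s ^ 2 := by
  rw [norm_smul, norm_inv, Real.norm_of_nonneg hs.le]; field_simp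

/-- The rescaled kernel has the same integral at every scale. -/
lemma integral_kern_scaled {n : ℕ} (z : EuclideanSpace ℝ (Fin n)) {s : ℝ} (hs : 0 < s) :
    ∫ x, (s ^ n)⁻¹ * kern (s⁻¹ • (x - z)) = ∫ y, kern (n := n) y := by
  rw [integral_const_mul, integral_sub_right_eq_self (fun x => kern (s⁻¹ • x)) z,
    Measure.integral_comp_inv_smul_of_nonneg _ _ hs.le, finrank_euclideanSpace_fin, smul_eq_mul,
    ← mul_assoc, inv_mul_cancel₀ (by positivity), one_mul]

/-- The test function at scale `s`. -/
def test {n : ℕ} (z : EuclideanSpace ℝ (Fin n)) (s : ℝ) (x : EuclideanSpace ℝ (Fin n)) : ℝ :=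
  prof (‖x - z‖ ^ 2 / s ^ 2)

lemma test_contDiff {n : ℕ} (z : EuclideanSpace ℝ (Fin n)) (s : ℝ) :
    ContDiff ℝ (⊤ : ℕ∞) (test z s) :=
  prof_contDiff.comp (((contDiff_id.sub contDiff_const).norm_sq ℝ).div_const _)

lemma one_lt_arg {n : ℕ} {z x : EuclideanSpace ℝ (Fin n)} {s : ℝ} (hs : 0 < s)
    (hx : x ∉ closedBall z s) : 1 < ‖x - z‖ ^ 2 / s ^ 2 := by
  rw [mem_closedBall, dist_eq_norm, not_le] at hx
  rw [one_lt_div (by positivity)]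
  exact pow_lt_pow_left₀ hx hs.le (by norm_num)

lemma test_tsupport {n : ℕ} (z : EuclideanSpace ℝ (Fin n)) {s : ℝ} (hs : 0 < s) :
    tsupport (test z s) ⊆ closedBall z s := by
  refine closure_minimal (fun x hx => ?_) isClosed_closedBall
  by_contra h
  exact hx (prof_zero (one_lt_arg hs h).le)

lemma test_compact {n : ℕ} (z : EuclideanSpace ℝ (Fin n)) {s : ℝ} (hs : 0 < s) :
    HasCompactSupport (test z s) :=
  (isCompact_closedBall z s).of_isClosed_subset (isClosed_tsupport _) (test_tsupport z hs)

lemma lap_test {n : ℕ} (z x : EuclideanSpace ℝ (Fin n)) (s : ℝ) :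
    lap (test z s) x = 4 * ‖x - z‖ ^ 2 / s ^ 4 * deriv (deriv prof) (‖x - z‖ ^ 2 / s ^ 2)
      + 2 * n / s ^ 2 * deriv prof (‖x - z‖ ^ 2 / s ^ 2) := by
  have hq : ∀ y, HasFDerivAt (fun y => ‖y - z‖ ^ 2 / s ^ 2) ((2 / s ^ 2) • innerSL ℝ (y - z)) y := by
    intro y
    have h := (((hasFDerivAt_id y).sub_const z).norm_sq).mul_const ((s ^ 2)⁻¹)
    refine HasFDerivAt.congr_fderiv (by simpa only [div_eq_mul_inv, id] using h) ?_
    ext v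
    simp
    ring
  have h1 : fderiv ℝ (test z s) = fun y =>
      (2 / s ^ 2 * deriv prof (‖y - z‖ ^ 2 / s ^ 2)) • innerSL ℝ (y - z) := by
    ext1 y
    have h := (prof_hasDerivAt (‖y - z‖ ^ 2 / s ^ 2)).comp_hasFDerivAt y (hq y)
    refine (show HasFDerivAt (test z s) _ y from h).fderiv.trans ?_
    rw [smul_smul, mul_comm]
  have h2 : HasFDerivAt (fun y : EuclideanSpace ℝ (Fin n) =>
      (2 / s ^ 2 * deriv prof (‖y - z‖ ^ 2 / s ^ 2)) • innerSL ℝ (y - z)) _ x :=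
    (((dprof_hasDerivAt (‖x - z‖ ^ 2 / s ^ 2)).comp_hasFDerivAt x (hq x)).const_mul
      (2 / s ^ 2)).smul
      ((innerSL ℝ).hasFDerivAt.comp x ((hasFDerivAt_id x).sub_const z))
  have h3 : ∀ i : Fin n, iteratedFDeriv ℝ 2 (test z s) x
      ![EuclideanSpace.single i 1, EuclideanSpace.single i 1]
      = 2 / s ^ 2 * deriv prof (‖x - z‖ ^ 2 / s ^ 2)
        + 4 / s ^ 4 * deriv (deriv prof) (‖x - z‖ ^ 2 / s ^ 2) * ((x - z) i) ^ 2 := by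
    intro i
    rw [iteratedFDeriv_two_apply, h1, h2.fderiv]
    simp [EuclideanSpace.inner_single_right, innerSL_apply_apply ℝ]
    ring
  unfold lap
  have h4 : ∑ i, ((x - z) i) ^ 2 = ‖x - z‖ ^ 2 := by
    simp [EuclideanSpace.norm_sq_eq]
  rw [Finset.sum_congr rfl fun i _ => h3 i, Finset.sum_add_distrib, ← Finset.mul_sum,
    ← Finset.mul_sum, h4, Finset.sum_const, Finset.card_univ, Fintype.card_fin, nsmul_eq_mul]
  ring

/-- The derivative in the scale of the rescaled kernel is a positive multiple of the Laplacian of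
the test function at that scale. -/
lemma kern_scaled_hasDerivAt {n : ℕ} (z x : EuclideanSpace ℝ (Fin n)) {s : ℝ} (hs : 0 < s) :
    HasDerivAt (fun s : ℝ => (s ^ n)⁻¹ * (-2 * deriv prof (‖x - z‖ ^ 2 / s ^ 2)))
      (s / s ^ n * lap (test z s) x) s := by
  have h1 : HasDerivAt (fun s : ℝ => ‖x - z‖ ^ 2 / s ^ 2) (-2 * ‖x - z‖ ^ 2 / s ^ 3) s := by
    have := ((hasDerivAt_pow 2 s).fun_inv (by positivity)).const_mul (‖x - z‖ ^ 2)
    refine HasDerivAt.congr_deriv (by simpa only [div_eq_mul_inv] using this) ?_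
    norm_num
    field_simp
  have h2 : HasDerivAt (fun s : ℝ => (s ^ n)⁻¹) (-n / (s ^ n * s)) s := by
    refine ((hasDerivAt_pow n s).fun_inv (by positivity)).congr_deriv ?_
    rcases n with _ | n
    · simp
    · rw [Nat.add_sub_cancel]; field_simp; ring
  have h3 := h2.fun_mul (((dprof_hasDerivAt (‖x - z‖ ^ 2 / s ^ 2)).comp s h1).const_mul (-2))
  refine h3.congr_deriv ?_
  rw [lap_test]
  simp only [Function.comp]
  field_simp
  ring

/-! ### The sub-mean value inequality -/

lemma kern_scaled_eq {n : ℕ} (z x : EuclideanSpace ℝ (Fin n)) {s : ℝ} (hs : 0 < s) :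
    (s ^ n)⁻¹ * kern (s⁻¹ • (x - z)) = (s ^ n)⁻¹ * (-2 * deriv prof (‖x - z‖ ^ 2 / s ^ 2)) := by
  rw [kern, kern_arg z x hs]

lemma kern_scaled_zero {n : ℕ} {z x : EuclideanSpace ℝ (Fin n)} {s : ℝ} (hs : 0 < s)
    (hx : x ∉ closedBall z s) : (s ^ n)⁻¹ * kern (s⁻¹ • (x - z)) = 0 := by
  rw [kern_scaled_eq z x hs, dprof_zero (one_lt_arg hs hx).le]; simp

lemma lap_test_zero {n : ℕ} {z x : EuclideanSpace ℝ (Fin n)} {s : ℝ} (hs : 0 < s)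
    (hx : x ∉ closedBall z s) : lap (test z s) x = 0 := by
  rw [lap_test, dprof_zero (one_lt_arg hs hx).le, ddprof_zero (one_lt_arg hs hx)]; simp

/-- The average of `f` over `closedBall z ρ` against the kernel at scale `s`. -/
def avg {n : ℕ} (z : EuclideanSpace ℝ (Fin n)) (ρ : ℝ) (f : EuclideanSpace ℝ (Fin n) → ℝ)
    (s : ℝ) : ℝ :=
  ∫ x in closedBall z ρ, f x * ((s ^ n)⁻¹ * (-2 * deriv prof (‖x - z‖ ^ 2 / s ^ 2)))

lemma avg_hasDerivAt {n : ℕ} {z : EuclideanSpace ℝ (Fin n)} {ρ : ℝ}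
    {f : EuclideanSpace ℝ (Fin n) → ℝ} (hf : ContinuousOn f (closedBall z ρ)) {s : ℝ}
    (hs : 0 < s) :
    HasDerivAt (avg z ρ f)
      (∫ x in closedBall z ρ, f x * (s / s ^ n * lap (test z s) x)) s := by
  have hK : IsCompact (closedBall z ρ) := isCompact_closedBall z ρ
  have hKm : MeasurableSet (closedBall z ρ) := hK.measurableSet
  have c1 := dprof_contDiff.continuous
  have c2 := ddprof_contDiff.continuous
  have hD : ContinuousOn (fun p : ℝ × EuclideanSpace ℝ (Fin n) =>
      p.1 / p.1 ^ n * lap (test z p.1) p.2) (Set.Icc (s / 2) (2 * s) ×ˢ closedBall z ρ) := by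
    have hne : ∀ p ∈ Set.Icc (s / 2) (2 * s) ×ˢ closedBall z ρ, p.1 ≠ 0 := fun p hp =>
      (lt_of_lt_of_le (by positivity) hp.1.1).ne'
    simp only [lap_test]
    have e : ContinuousOn (fun p : ℝ × EuclideanSpace ℝ (Fin n) => ‖p.2 - z‖ ^ 2 / p.1 ^ 2)
        (Set.Icc (s / 2) (2 * s) ×ˢ closedBall z ρ) :=
      ContinuousOn.div (by fun_prop) (by fun_prop) fun p hp => pow_ne_zero _ (hne p hp)
    refine ContinuousOn.mul (ContinuousOn.div (by fun_prop) (by fun_prop)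
      fun p hp => pow_ne_zero _ (hne p hp)) (ContinuousOn.add (ContinuousOn.mul
        (ContinuousOn.div (by fun_prop) (by fun_prop) fun p hp => pow_ne_zero _ (hne p hp))
        (c2.comp_continuousOn e)) (ContinuousOn.mul
        (ContinuousOn.div (by fun_prop) (by fun_prop) fun p hp => pow_ne_zero _ (hne p hp))
        (c1.comp_continuousOn e)))
  obtain ⟨B, hB⟩ := (isCompact_Icc.prod hK).exists_bound_of_continuousOn hD
  have hF : ∀ t, ContinuousOn (fun x => f x * ((t ^ n)⁻¹ *
      (-2 * deriv prof (‖x - z‖ ^ 2 / t ^ 2)))) (closedBall z ρ) := fun t =>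
    hf.mul (by fun_prop)
  have hF' : ContinuousOn (fun x => f x * (s / s ^ n * lap (test z s) x)) (closedBall z ρ) := by
    simp only [lap_test]
    exact hf.mul (by fun_prop)
  refine (hasDerivAt_integral_of_dominated_loc_of_deriv_le
    (F := fun t x => f x * ((t ^ n)⁻¹ * (-2 * deriv prof (‖x - z‖ ^ 2 / t ^ 2))))
    (F' := fun t x => f x * (t / t ^ n * lap (test z t) x))
    (bound := fun x => ‖f x‖ * B) (s := Set.Icc (s / 2) (2 * s))
    (Icc_mem_nhds (by linarith) (by linarith))
    (Eventually.of_forall fun t => (hF t).aestronglyMeasurable hKm)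
    ((hF s).integrableOn_compact hK) (hF'.aestronglyMeasurable hKm) ?_
    ((hf.norm.mul continuousOn_const).integrableOn_compact hK) ?_).2
  · filter_upwards [ae_restrict_mem hKm] with x hx t ht
    rw [norm_mul]
    exact mul_le_mul_of_nonneg_left (hB (t, x) ⟨ht, hx⟩) (norm_nonneg _)
  · refine Eventually.of_forall fun x t ht => ?_
    exact (kern_scaled_hasDerivAt z x (lt_of_lt_of_le (by positivity) ht.1)).const_mul (f x)

/-- The sign of the derivative at `s < ρ` is subharmonicity tested against `test z s`. -/
lemma avg_monotoneOn {n : ℕ} {U : Set (EuclideanSpace ℝ (Fin n))}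
    {z : EuclideanSpace ℝ (Fin n)} {ρ : ℝ} {f : EuclideanSpace ℝ (Fin n) → ℝ}
    (hU : IsOpen U) (hKU : closedBall z ρ ⊆ U) (hf : ContinuousOn f U) (hs : SubharmonicOn U f) :
    MonotoneOn (avg z ρ f) (Set.Ioc 0 ρ) := by
  have hd := fun s (h : 0 < s) => avg_hasDerivAt (hf.mono hKU) h
  refine monotoneOn_of_deriv_nonneg (convex_Ioc 0 ρ)
    (fun s h => (hd s h.1).continuousAt.continuousWithinAt) ?_ ?_
  · rw [interior_Ioc]
    exact fun s h => (hd s h.1).differentiableAt.differentiableWithinAt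
  · rw [interior_Ioc]
    intro s h
    have hsub : closedBall z s ⊆ closedBall z ρ := closedBall_subset_closedBall h.2.le
    rw [(hd s h.1).deriv]
    have e : ∫ x in closedBall z ρ, f x * (s / s ^ n * lap (test z s) x)
        = s / s ^ n * ∫ x in U, f x * lap (test z s) x := by
      rw [setIntegral_eq_of_subset_of_forall_sdiff_eq_zero hU.measurableSet hKU
        (f := fun x => f x * lap (test z s) x), ← integral_const_mul]
      · congr 1; ext x; ring
      · intro x hx
        simp only [lap_test_zero h.1 fun hx' => hx.2 (hsub hx'), mul_zero]
    rw [e]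
    have hs0 := h.1
    refine mul_nonneg (by positivity) (hs _ (test_contDiff z s) (test_compact z h.1)
      ((test_tsupport z h.1).trans (hsub.trans hKU)) fun x => prof_nonneg _)

/-- Sub-mean value inequality, with a dimensional constant. -/
lemma exists_submean {n : ℕ} (hn : 1 ≤ n) : ∃ C : ℝ, 0 < C ∧
    ∀ (U : Set (EuclideanSpace ℝ (Fin n))) (z : EuclideanSpace ℝ (Fin n)) (ρ : ℝ)
      (f : EuclideanSpace ℝ (Fin n) → ℝ), IsOpen U → 0 < ρ → closedBall z ρ ⊆ U →
      ContinuousOn f U → (∀ x ∈ U, 0 ≤ f x) → SubharmonicOn U f →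
      f z * ρ ^ n ≤ C * ∫ x in closedBall z ρ, f x := by
  obtain ⟨A, hA, hkA⟩ := kern_bdd (n := n)
  have hM := kern_integral_pos hn
  set M := ∫ y, kern (n := n) y with hMdef
  refine ⟨A / M, by positivity, fun U z ρ f hU hρ hKU hf hf0 hs => ?_⟩
  have hK : IsCompact (closedBall z ρ) := isCompact_closedBall z ρ
  have hKm : MeasurableSet (closedBall z ρ) := hK.measurableSet
  have hfK := hf.mono hKU
  have c1 := dprof_contDiff.continuous
  have ck := kern_cont (n := n)
  have havg : ∀ s, 0 < s → avg z ρ f s =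
      ∫ x in closedBall z ρ, f x * ((s ^ n)⁻¹ * kern (s⁻¹ • (x - z))) := fun s h => by
    simp only [avg, kern_scaled_eq z _ h]
  have hup : avg z ρ f ρ ≤ A / ρ ^ n * ∫ x in closedBall z ρ, f x := by
    rw [havg ρ hρ, ← integral_const_mul]
    refine setIntegral_mono_on ((hfK.mul (by fun_prop)).integrableOn_compact hK)
      ((continuousOn_const.mul hfK).integrableOn_compact hK) hKm fun x hx => ?_
    have h0 := hf0 x (hKU hx)
    have h1 := mul_le_mul_of_nonneg_left (hkA (ρ⁻¹ • (x - z))) h0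
    have h2 := mul_le_mul_of_nonneg_left h1 (show 0 ≤ (ρ ^ n)⁻¹ by positivity)
    calc _ = (ρ ^ n)⁻¹ * (f x * kern (ρ⁻¹ • (x - z))) := by ring
      _ ≤ _ := h2
      _ = _ := by ring
  have hlow : f z * M ≤ avg z ρ f ρ := by
    refine le_of_forall_pos_le_add fun ε hε => ?_
    have hcont : ContinuousAt f z := hf.continuousAt (hU.mem_nhds (hKU (mem_closedBall_self hρ.le)))
    have hev : ∀ᶠ x in nhds z, f z - ε / M < f x :=
      hcont.eventually (lt_mem_nhds (by linarith [show 0 < ε / M by positivity]))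
    obtain ⟨δ, hδ, hball⟩ := Metric.eventually_nhds_iff.1 hev
    set s := min (δ / 2) ρ with hsdef
    have hs0 : 0 < s := by positivity
    have hsub : closedBall z s ⊆ closedBall z ρ := closedBall_subset_closedBall (min_le_right _ _)
    have hint : ∫ x in closedBall z ρ, (s ^ n)⁻¹ * kern (s⁻¹ • (x - z)) = M := by
      rw [setIntegral_eq_integral_of_forall_compl_eq_zero
        fun x hx => kern_scaled_zero hs0 fun h => hx (hsub h), integral_kern_scaled z hs0]
    have h1 : (f z - ε / M) * M ≤ avg z ρ f s := by
      rw [havg s hs0, ← hint, ← integral_const_mul, hint]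
      refine setIntegral_mono_on (ContinuousOn.integrableOn_compact hK (by fun_prop))
        ((hfK.mul (by fun_prop)).integrableOn_compact hK) hKm fun x hx => ?_
      by_cases hxs : x ∈ closedBall z s
      · have hlt : dist x z < δ :=
          lt_of_le_of_lt hxs (lt_of_le_of_lt (min_le_left _ _) (by linarith))
        exact mul_le_mul_of_nonneg_right (hball hlt).le
          (mul_nonneg (by positivity) (kern_nonneg _))
      · simp only [kern_scaled_zero hs0 hxs, mul_zero, le_refl]
    have h2 := avg_monotoneOn hU hKU hf hs ⟨hs0, min_le_right _ _⟩ ⟨hρ, le_rfl⟩ (min_le_right _ _)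
    have h3 : (f z - ε / M) * M = f z * M - ε := by field_simp
    linarith
  have h := hlow.trans hup
  rw [div_mul_eq_mul_div, le_div_iff₀ (by positivity)] at h
  rw [div_mul_eq_mul_div, le_div_iff₀ hM]
  linarith

/-! ### Arbitrary exponents -/

/-- If `b` is at most a fixed multiple `L` of `a`, then `b` is at most a small multiple of `a`
plus a multiple of `a ^ (1 - r) * b ^ r`. -/
lemma le_add_rpow {r ε L a b : ℝ} (hr : 0 < r) (hε : 0 < ε) (hL : 0 < L) (ha : 0 < a)
    (hb0 : 0 ≤ b) (hbL : b ≤ L * a) : b ≤ ε * a + L / ε ^ r * (a / a ^ r) * b ^ r := by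
  rcases le_total b (ε * a) with h | h
  · have : 0 ≤ L / ε ^ r * (a / a ^ r) * b ^ r := by positivity
    linarith
  · have hb : (ε * a) ^ r ≤ b ^ r := Real.rpow_le_rpow (by positivity) h hr.le
    rw [Real.mul_rpow hε.le ha.le] at hb
    have h1 : L / ε ^ r * (a / a ^ r) * (ε ^ r * a ^ r) ≤ L / ε ^ r * (a / a ^ r) * b ^ r :=
      mul_le_mul_of_nonneg_left hb (by positivity)
    have h2 : L / ε ^ r * (a / a ^ r) * (ε ^ r * a ^ r) = L * a := by field_simp
    have h3 : 0 < ε * a := by positivity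
    linarith

/-- **Mean value inequality for subharmonic functions with arbitrary exponents**
(Euclidean case of Lemma 4.4): for `0 < r < ∞` and `1 < η ≤ 4` there is a constant
`C` such that every nonnegative continuous subharmonic function `f` on a neighborhood
of `B̄(x₀,4R)` satisfies `sup_{B(x₀,R)} f ≤ C (⨍_{B(x₀,ηR)} f^r)^{1/r}`. -/
theorem mean_value_subharmonic {n : ℕ} (hn : 1 ≤ n)
    (r η : ℝ) (hr : 0 < r) (hη1 : 1 < η) (hη2 : η ≤ 4) :
    ∃ C : ℝ, 0 < C ∧
      ∀ (x₀ : EuclideanSpace ℝ (Fin n)) (R : ℝ), 0 < R →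
        ∀ (U : Set (EuclideanSpace ℝ (Fin n))) (f : EuclideanSpace ℝ (Fin n) → ℝ),
          IsOpen U → closedBall x₀ (4 * R) ⊆ U →
          ContinuousOn f U → (∀ x ∈ U, 0 ≤ f x) → SubharmonicOn U f →
          ∀ x ∈ ball x₀ R,
            f x ≤ C * (⨍ y in ball x₀ (η * R), f y ^ r) ^ (1 / r) := by
  obtain ⟨C₀, hC₀, hsub⟩ := exists_submean hn
  set V := volume.real (ball (0 : EuclideanSpace ℝ (Fin n)) 1) with hVdef
  have hV : 0 < V := ENNReal.toReal_pos (measure_ball_pos _ _ one_pos).ne' measure_ball_lt_top.ne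
  set L : ℝ := (2 ^ n : ℝ) ^ (1 / r) with hLdef
  have hL : 0 < L := by positivity
  have hLr : L ^ r = 2 ^ n := by
    rw [hLdef, ← Real.rpow_mul (by positivity), one_div_mul_cancel hr.ne', Real.rpow_one]
  -- small enough for the linear term of `le_add_rpow` to be absorbed into the left-hand side
  set ε : ℝ := 1 / (2 * C₀ * V) with hεdef
  have hε : 0 < ε := by positivity
  have hη : 0 < η - 1 := by linarith
  set C₄ : ℝ := 2 ^ n * (2 * C₀ * (L / ε ^ r)) * (η ^ n * V) / (η - 1) ^ n with hC₄def
  have hη0 : 0 < η := by linarith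
  have hC₄ : 0 < C₄ := by positivity
  refine ⟨C₄ ^ (1 / r), by positivity, fun x₀ R hR U f hU hBU hf hf0 hs x hx => ?_⟩
  have hηR : 0 < η * R := by positivity
  have hcU : closedBall x₀ (η * R) ⊆ U :=
    (closedBall_subset_closedBall (by nlinarith)).trans hBU
  have hbU : ball x₀ (η * R) ⊆ U := ball_subset_closedBall.trans hcU
  have hK : IsCompact (closedBall x₀ (η * R)) := isCompact_closedBall _ _
  have hfr : ContinuousOn (fun y => f y ^ r) U := hf.rpow_const fun _ _ => Or.inr hr.le
  have hJint : IntegrableOn (fun y => f y ^ r) (ball x₀ (η * R)) :=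
    ((hfr.mono hcU).integrableOn_compact hK).mono_set ball_subset_closedBall
  set J := ∫ y in ball x₀ (η * R), f y ^ r with hJdef
  have hJ0 : 0 ≤ J := setIntegral_nonneg measurableSet_ball fun y hy =>
    Real.rpow_nonneg (hf0 y (hbU hy)) _
  have hav : ⨍ y in ball x₀ (η * R), f y ^ r = ((η * R) ^ n * V)⁻¹ * J := by
    rw [setAverage_eq, smul_eq_mul, measureReal_def, Measure.addHaar_ball_of_pos _ _ hηR,
      ENNReal.toReal_mul, ENNReal.toReal_ofReal (by positivity), finrank_euclideanSpace_fin]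
    rfl
  rw [hav, ← Real.mul_rpow hC₄.le (by positivity)]
  have hxη : x ∈ closedBall x₀ (η * R) :=
    ball_subset_closedBall (ball_subset_ball (by nlinarith) hx)
  have hfx := hf0 x (hcU hxη)
  rw [one_div, Real.le_rpow_inv_iff_of_pos hfx (by positivity) hr]
  rcases hfx.eq_or_lt with h0 | hfx
  · rw [← h0, Real.zero_rpow hr.ne']; positivity
  -- this product vanishes on the boundary, so its maximum is interior: maximize `f ^ r` times the `n`-th power of the distance to the boundary
  obtain ⟨z, hz, hmax⟩ := hK.exists_isMaxOn ⟨x, hxη⟩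
    (f := fun y => f y ^ r * (η * R - dist y x₀) ^ n) ((hfr.mono hcU).mul (by fun_prop))
  have hmax : ∀ y ∈ closedBall x₀ (η * R),
    f y ^ r * (η * R - dist y x₀) ^ n ≤ f z ^ r * (η * R - dist z x₀) ^ n := fun y hy => hmax hy
  set d := η * R - dist z x₀ with hddef
  have hxR : (η - 1) * R ≤ η * R - dist x x₀ := by
    have := mem_ball.1 hx; linarith
  have hxm : f x ^ r * ((η - 1) * R) ^ n ≤ f z ^ r * d ^ n :=
    le_trans (by gcongr) (hmax x hxη)
  have hpos : 0 < f z ^ r * d ^ n := lt_of_lt_of_le (by positivity) hxm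
  have hd : 0 < d := by
    refine lt_of_le_of_ne (by have := mem_closedBall.1 hz; linarith) fun h => ?_
    rw [← h, zero_pow (by omega), mul_zero] at hpos
    exact hpos.false
  have hfz : 0 < f z := by
    refine lt_of_le_of_ne (hf0 z (hcU hz)) fun h => ?_
    rw [← h, Real.zero_rpow hr.ne', zero_mul] at hpos
    exact hpos.false
  have hsmall : closedBall z (d / 2) ⊆ ball x₀ (η * R) := fun y hy => by
    have h1 := mem_closedBall.1 hy
    have h2 := dist_triangle y z x₀
    rw [mem_ball]; linarith
  have hyL : ∀ y ∈ closedBall z (d / 2), f y ≤ L * f z := fun y hy => by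
    have hy0 := hf0 y (hbU (hsmall hy))
    have h1 := mem_closedBall.1 hy
    have h2 := dist_triangle y z x₀
    have h3 : f y ^ r * (d / 2) ^ n ≤ f z ^ r * d ^ n :=
      le_trans (mul_le_mul_of_nonneg_left (pow_le_pow_left₀ (by positivity) (by linarith) n)
        (by positivity)) (hmax y (ball_subset_closedBall (hsmall hy)))
    rw [div_pow, mul_div_assoc', div_le_iff₀ (by positivity)] at h3
    rw [← Real.rpow_le_rpow_iff hy0 (by positivity) hr, Real.mul_rpow hL.le hfz.le, hLr]
    have hdn : 0 < d ^ n := by positivity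
    nlinarith
  have hcc : IsCompact (closedBall z (d / 2)) := isCompact_closedBall _ _
  have hccU := hsmall.trans hbU
  set I := ∫ y in closedBall z (d / 2), f y ^ r with hIdef
  have hIJ : I ≤ J := setIntegral_mono_set hJint
    ((ae_restrict_mem measurableSet_ball).mono fun y hy => Real.rpow_nonneg (hf0 y (hbU hy)) _)
    hsmall.eventuallyLE
  have hvol : volume.real (closedBall z (d / 2)) = (d / 2) ^ n * V := by
    rw [Measure.addHaar_real_closedBall _ _ (by positivity), finrank_euclideanSpace_fin]
  have hint : ∫ y in closedBall z (d / 2), f y ≤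
      ε * f z * ((d / 2) ^ n * V) + L / ε ^ r * (f z / f z ^ r) * I := by
    have i2 : IntegrableOn (fun y => L / ε ^ r * (f z / f z ^ r) * f y ^ r)
        (closedBall z (d / 2)) :=
      ((hfr.mono hccU).integrableOn_compact hcc).const_mul _
    have i1 : IntegrableOn (fun _ => ε * f z) (closedBall z (d / 2)) :=
      continuousOn_const.integrableOn_compact hcc
    calc ∫ y in closedBall z (d / 2), f y
        ≤ ∫ y in closedBall z (d / 2), (ε * f z + L / ε ^ r * (f z / f z ^ r) * f y ^ r) :=
          setIntegral_mono_on ((hf.mono hccU).integrableOn_compact hcc) (i1.add i2)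
            measurableSet_closedBall fun y hy =>
              le_add_rpow hr hε hL hfz (hf0 y (hccU hy)) (hyL y hy)
      _ = _ := by
          rw [integral_add i1 i2, setIntegral_const, integral_const_mul, hvol, smul_eq_mul]
          ring
  have hkey : f z * (d / 2) ^ n ≤ C₀ * ∫ y in closedBall z (d / 2), f y :=
    hsub U z (d / 2) f hU (by positivity) hccU hf hf0 hs
  have h1 : f z * (d / 2) ^ n ≤
      f z * (d / 2) ^ n / 2 + C₀ * (L / ε ^ r * (f z / f z ^ r) * I) := by
    refine hkey.trans ((mul_le_mul_of_nonneg_left hint hC₀.le).trans_eq ?_)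
    rw [mul_add]; congr 1
    rw [hεdef]; field_simp
  have hfzr : 0 < f z ^ r := by positivity
  have h2 : f z ^ r * (d / 2) ^ n ≤ 2 * C₀ * (L / ε ^ r) * I := by
    have h3 : f z * (d / 2) ^ n ≤ 2 * C₀ * (L / ε ^ r) * I * (f z / f z ^ r) := by linarith
    rw [mul_div_assoc', le_div_iff₀ hfzr] at h3
    refine le_of_mul_le_mul_right ?_ hfz
    linarith
  have h3 : f z ^ r * d ^ n ≤ 2 ^ n * (2 * C₀ * (L / ε ^ r) * J) := by
    have : f z ^ r * d ^ n = 2 ^ n * (f z ^ r * (d / 2) ^ n) := by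
      rw [div_pow]; field_simp
    rw [this]
    have : 2 * C₀ * (L / ε ^ r) * I ≤ 2 * C₀ * (L / ε ^ r) * J :=
      mul_le_mul_of_nonneg_left hIJ (by positivity)
    exact mul_le_mul_of_nonneg_left (h2.trans this) (by positivity)
  have h4 := hxm.trans h3
  have h5 : C₄ * (((η * R) ^ n * V)⁻¹ * J) =
      2 ^ n * (2 * C₀ * (L / ε ^ r) * J) / ((η - 1) * R) ^ n := by
    rw [hC₄def, mul_pow, mul_pow]; field_simp
  rw [h5, le_div_iff₀ (by positivity)]
  exact h4
end
end
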